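/- arXiv:1504.02583 — 4 statements merged into one kernel-verified Lean document; each statement's English description precedes it below -/
import Mathlib

section
/- Let (Ω_i, Σ_i, P_i), i = 1,…,n, be probability spaces and let (Ω, Σ, P) be their product space. Let Ω* ⊆ Ω be a set of exceptional events, let X : Ω → ℝ be a random variable, let M = max{sup|X|, 1}, and let c ≥ 1. If X has upward (s,c)-certificates with respect to Ω*, then |E[X] − med(X)| ≤ 20·c·√s + 20·M²·P[Ω*]. -/
open MeasureTheory

/-- `X` has upward `(s,c)`-certificates with respect to the exceptional set `Ωstar`:
for every `t > 0` and every `ω ∉ Ωstar` there is an index set `I` of size at most `s`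
such that `X ω' > X ω − t` for every `ω' ∉ Ωstar` whose restriction to `I` differs from
that of `ω` in fewer than `t/c` coordinates. -/
def HasUpwardCertificates {n : ℕ} {Ω : Fin n → Type*}
    (Ωstar : Set (∀ i, Ω i)) (X : (∀ i, Ω i) → ℝ) (s c : ℝ) : Prop :=
  ∀ t : ℝ, 0 < t → ∀ ω ∉ Ωstar, ∃ I : Finset (Fin n), (I.card : ℝ) ≤ s ∧
    ∀ ω' ∉ Ωstar,
      (({i : Fin n | i ∈ I ∧ ω i ≠ ω' i}.ncard : ℝ) < t / c → X ω - t < X ω')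

/-- The median of a random variable `X` with respect to a measure `μ`:
`med(X) = sup {t | μ{X ≤ t} ≤ 1/2}`. -/
noncomputable def medianOf {α : Type*} [MeasurableSpace α] (μ : Measure α) (X : α → ℝ) : ℝ :=
  sSup {t : ℝ | μ {ω | X ω ≤ t} ≤ 1 / 2}

/-!
Two independent samples `ω` and `ω'` span a discrete cube, whose vertices take each coordinate from
one of them; every antipodal pair of vertices is again distributed as two independent samples. Let
`B = {X ≤ a}` and `A = {X ≥ a + t}`, both off the exceptional set. If a vertex lies in `A`, its
distance to each point of `B`, counted inside the certificate of that point, is at least `t / c`.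
The distance to `B` so defined increases by at most `1` along an edge, and only along edges in the
certificate of the nearest point, so at each vertex its squared increases over the edges sum to at
most `s`. Since on a cube the squared diagonals sum to at most the squared edges (Enflo), only a
proportion `c² s / t²` of the vertices can lie in `B` and have their antipode in `A`. Averaging over
the cubes gives `P(A) P(B) ≤ c² s / t²`, and the measurability of the distance on the product space
is never at stake.

With `a = med X` and `a = med X - t` these are tail bounds of order `c² s / t²` off the exceptional
set, which integrate to order `c √s`. The exceptional set contributes at most `2 M` times its
probability, and when this probability is at least `1 / 4` there is nothing to prove.
-/

open ProbabilityTheory Filter Topology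
open scoped symmDiff Finset

section Cube

lemma sum_comp_symmDiff {B : Type*} [Fintype B] [GeneralizedBooleanAlgebra B]
    {E : Type*} [AddCommMonoid E] (v : B) (f : B → E) : ∑ x, f (x ∆ v) = ∑ x, f x :=
  Equiv.sum_comp (symmDiff_left_involutive v).toPerm f

lemma norm_sq_diagonals_le {E : Type*} [NormedAddCommGroup E] [InnerProductSpace ℝ E]
    (a b c d : E) :
    ‖a - d‖ ^ 2 + ‖b - c‖ ^ 2 ≤ ‖a - b‖ ^ 2 + ‖c - d‖ ^ 2 + (‖a - c‖ ^ 2 + ‖b - d‖ ^ 2) := by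
  have hsum : 0 ≤ ‖(a + d) - (b + c)‖ ^ 2 := sq_nonneg _
  simp only [norm_sub_sq_real, norm_add_sq_real, inner_add_left, inner_add_right] at hsum ⊢
  linarith [real_inner_comm d b, real_inner_comm d c]

lemma sum_norm_sq_sub_symmDiff_le {B : Type*} [Fintype B] [GeneralizedBooleanAlgebra B]
    {E : Type*} [NormedAddCommGroup E] [InnerProductSpace ℝ E] (f : B → E) (u v : B) :
    ∑ x, ‖f x - f (x ∆ (u ∆ v))‖ ^ 2 ≤
      ∑ x, ‖f x - f (x ∆ u)‖ ^ 2 + ∑ x, ‖f x - f (x ∆ v)‖ ^ 2 := by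
  have hquad := Finset.sum_le_sum fun x (_ : x ∈ Finset.univ) ↦
    norm_sq_diagonals_le (f x) (f (x ∆ u)) (f (x ∆ v)) (f (x ∆ (u ∆ v)))
  have hdiag := sum_comp_symmDiff u fun x ↦ ‖f x - f (x ∆ (u ∆ v))‖ ^ 2
  have hu := sum_comp_symmDiff v fun x ↦ ‖f x - f (x ∆ u)‖ ^ 2
  have hv := sum_comp_symmDiff u fun x ↦ ‖f x - f (x ∆ v)‖ ^ 2
  simp only [symmDiff_symmDiff_cancel_left, symmDiff_assoc, symmDiff_comm v u] at hdiag hu hv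
  simp only [Finset.sum_add_distrib] at hquad
  linarith

lemma sum_sq_sub_symmDiff_eq {B : Type*} [Fintype B] [GeneralizedBooleanAlgebra B]
    (f : B → ℝ) (v : B) :
    ∑ x, (f x - f (x ∆ v)) ^ 2 = 2 * ∑ x, (f (x ∆ v) - f x)⁺ ^ 2 := by
  have hsplit (a b : ℝ) : (a - b) ^ 2 = (b - a)⁺ ^ 2 + (a - b)⁺ ^ 2 := by
    rcases le_total a b with hab | hab
    · rw [posPart_of_nonneg (sub_nonneg.2 hab), posPart_of_nonpos (sub_nonpos.2 hab)]; ring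
    · rw [posPart_of_nonneg (sub_nonneg.2 hab), posPart_of_nonpos (sub_nonpos.2 hab)]; ring
  have hreindex := sum_comp_symmDiff v fun x ↦ (f (x ∆ v) - f x)⁺ ^ 2
  simp only [symmDiff_symmDiff_cancel_right] at hreindex
  simp only [hsplit, Finset.sum_add_distrib, hreindex, two_mul]

variable {ι : Type*} [Fintype ι] [DecidableEq ι]

lemma sum_norm_sq_sub_symmDiff_le_sum_singleton {E : Type*} [NormedAddCommGroup E]
    [InnerProductSpace ℝ E] (f : Finset ι → E) (V : Finset ι) :
    ∑ x, ‖f x - f (x ∆ V)‖ ^ 2 ≤ ∑ i ∈ V, ∑ x, ‖f x - f (x ∆ {i})‖ ^ 2 := by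
  induction V using Finset.induction_on with
  | empty =>
    rw [Finset.sum_empty, ← Finset.bot_eq_empty]
    simp only [symmDiff_bot, sub_self, norm_zero, ne_eq, OfNat.ofNat_ne_zero, not_false_eq_true,
      zero_pow, Finset.sum_const_zero, le_refl]
  | insert i V hi ih =>
    have hinsert : insert i V = {i} ∆ V := by
      rw [Finset.symmDiff_eq_union (Finset.disjoint_singleton_left.2 hi), Finset.insert_eq]
    rw [Finset.sum_insert hi, hinsert]
    exact (sum_norm_sq_sub_symmDiff_le f {i} V).trans (by gcongr)

lemma sum_posPart_compl_sub_sq_le (f : Finset ι → ℝ) :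
    ∑ x, (f xᶜ - f x)⁺ ^ 2 ≤ ∑ x, ∑ i, (f (x ∆ {i}) - f x)⁺ ^ 2 := by
  have hcube := sum_norm_sq_sub_symmDiff_le_sum_singleton f Finset.univ
  simp only [Real.norm_eq_abs, sq_abs] at hcube
  rw [sum_sq_sub_symmDiff_eq, Finset.sum_congr rfl fun i _ ↦ sum_sq_sub_symmDiff_eq f {i},
    ← Finset.mul_sum] at hcube
  simp only [← Finset.top_eq_univ, symmDiff_top, hnot_eq_compl] at hcube
  rw [Finset.sum_comm]
  exact le_of_mul_le_mul_left hcube two_pos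

end Cube

section CertificateDist

variable {ι : Type*} [DecidableEq ι] (I : Finset ι → Finset ι) {B : Set (Finset ι)}

/-- The distance from `x` to `B` in which the distance to `b ∈ B` counts only the coordinates in the
certificate `I b`. Vertices of the cube are subsets of `ι`, so `x` and `b` differ at the coordinates
in `b ∆ x`. The value at empty `B` is the junk value `0`. -/
noncomputable def certificateDist (B : Set (Finset ι)) (x : Finset ι) : ℕ :=
  ⨅ b : B, #(I b ∩ (b ∆ x))

lemma certificateDist_le {b : Finset ι} (hb : b ∈ B) (x : Finset ι) :
    certificateDist I B x ≤ #(I b ∩ (b ∆ x)) :=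
  ciInf_le' (fun b : B ↦ #(I b ∩ (b ∆ x))) ⟨b, hb⟩

lemma certificateDist_eq_zero {b : Finset ι} (hb : b ∈ B) : certificateDist I B b = 0 := by
  simpa using certificateDist_le I hb b

lemma exists_certificateDist_eq [Finite ι] (hB : B.Nonempty) (x : Finset ι) :
    ∃ b ∈ B, certificateDist I B x = #(I b ∩ (b ∆ x)) := by
  have := hB.to_subtype
  obtain ⟨⟨b, hb⟩, h⟩ := exists_eq_ciInf_of_finite (f := fun b : B ↦ #(I b ∩ (b ∆ x)))
  exact ⟨b, hb, h.symm⟩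

lemma card_inter_symmDiff_singleton_le (J b x : Finset ι) (i : ι) :
    #(J ∩ (b ∆ (x ∆ {i}))) ≤ #(J ∩ (b ∆ x)) + if i ∈ J then 1 else 0 := by
  have hsub : J ∩ (b ∆ (x ∆ {i})) ⊆ J ∩ (b ∆ x) ∪ J ∩ {i} := by
    rw [← symmDiff_assoc, ← Finset.inter_union_distrib_left]
    exact Finset.inter_subset_inter_left symmDiff_le_sup
  have hcard : #(J ∩ {i}) = if i ∈ J then 1 else 0 := by split_ifs with h <;> simp [h]
  exact hcard ▸ (Finset.card_le_card hsub).trans (Finset.card_union_le _ _)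

variable {I} [Fintype ι]

lemma sum_posPart_certificateDist_sub_sq_le {s : ℝ} (hB : B.Nonempty)
    (hI : ∀ b ∈ B, (#(I b) : ℝ) ≤ s) (x : Finset ι) :
    ∑ i, ((certificateDist I B (x ∆ {i}) : ℝ) - certificateDist I B x)⁺ ^ 2 ≤ s := by
  obtain ⟨b, hb, hbx⟩ := exists_certificateDist_eq I hB x
  have hstep (i : ι) : ((certificateDist I B (x ∆ {i}) : ℝ) - certificateDist I B x)⁺ ^ 2 ≤
      if i ∈ I b then 1 else 0 := by
    have hle : (certificateDist I B (x ∆ {i}) : ℝ) ≤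
        certificateDist I B x + if i ∈ I b then 1 else 0 := by
      rw [hbx]
      exact_mod_cast (certificateDist_le I hb _).trans
        (card_inter_symmDiff_singleton_le (I b) b x i)
    split_ifs at hle ⊢
    · exact pow_le_one₀ (posPart_nonneg _) (max_le (by linarith) zero_le_one)
    · rw [posPart_of_nonpos (by linarith)]; simp
  calc _ ≤ ∑ i, if i ∈ I b then (1 : ℝ) else 0 := Finset.sum_le_sum fun i _ ↦ hstep i
    _ = #(I b) := by simp
    _ ≤ s := hI b hb

theorem ncard_antipodal_mul_sq_le {A : Set (Finset ι)} {s r : ℝ} (hs : 0 ≤ s) (hr : 0 ≤ r)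
    (hI : ∀ b ∈ B, (#(I b) : ℝ) ≤ s)
    (hAB : ∀ b ∈ B, ∀ a ∈ A, r ≤ #(I b ∩ (b ∆ a))) :
    ({x | x ∈ B ∧ xᶜ ∈ A}.ncard : ℝ) * r ^ 2 ≤ Fintype.card (Finset ι) * s := by
  classical
  rcases B.eq_empty_or_nonempty with rfl | hB
  · simpa using hs
  have hfar (x : Finset ι) (hx : x ∈ B ∧ xᶜ ∈ A) :
      r ≤ (certificateDist I B xᶜ - certificateDist I B x : ℝ)⁺ := by
    obtain ⟨b, hb, hbx⟩ := exists_certificateDist_eq I hB xᶜ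
    rw [certificateDist_eq_zero I hx.1, hbx, Nat.cast_zero, sub_zero]
    exact (hAB b hb _ hx.2).trans (le_posPart _)
  calc ({x | x ∈ B ∧ xᶜ ∈ A}.ncard : ℝ) * r ^ 2
      = ∑ x with x ∈ B ∧ xᶜ ∈ A, r ^ 2 := by
        rw [Finset.sum_const, nsmul_eq_mul, Set.ncard_eq_toFinset_card', Set.toFinset_ofPred]
    _ ≤ ∑ x with x ∈ B ∧ xᶜ ∈ A, (certificateDist I B xᶜ - certificateDist I B x : ℝ)⁺ ^ 2 :=
        Finset.sum_le_sum fun x hx ↦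
          pow_le_pow_left₀ hr (hfar x (Finset.mem_filter_univ x |>.1 hx)) 2
    _ ≤ ∑ x, (certificateDist I B xᶜ - certificateDist I B x : ℝ)⁺ ^ 2 :=
        Finset.sum_le_univ_sum_of_nonneg fun x ↦ sq_nonneg _
    _ ≤ ∑ x, ∑ i, ((certificateDist I B (x ∆ {i}) : ℝ) - certificateDist I B x)⁺ ^ 2 :=
        sum_posPart_compl_sub_sq_le fun x ↦ (certificateDist I B x : ℝ)
    _ ≤ ∑ _x : Finset ι, s :=
        Finset.sum_le_sum fun x _ ↦ sum_posPart_certificateDist_sub_sq_le hB hI x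
    _ = Fintype.card (Finset ι) * s := by simp

end CertificateDist

section Median

variable {α : Type*} [MeasurableSpace α] {μ : Measure α} [IsProbabilityMeasure μ] {X : α → ℝ}

lemma isLUB_medianOf (hX : AEMeasurable X μ) :
    IsLUB {t | cdf (μ.map X) t ≤ 1 / 2} (medianOf μ X) := by
  have := Measure.isProbabilityMeasure_map hX
  have hset : {t | μ {ω | X ω ≤ t} ≤ 1 / 2} = {t | cdf (μ.map X) t ≤ 1 / 2} := by
    ext t
    have hcdf : cdf (μ.map X) t = μ.real {ω | X ω ≤ t} := by
      rw [cdf_eq_real, map_measureReal_apply_of_aemeasurable hX measurableSet_Iic]; rfl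
    rw [Set.mem_ofPred_eq, Set.mem_ofPred_eq, hcdf, measureReal_def,
      ← ENNReal.toReal_le_toReal (measure_ne_top _ _) (by simp)]
    norm_num
  rw [medianOf, hset]
  obtain ⟨b, hb⟩ :=
    ((tendsto_cdf_atTop (μ.map X)).eventually_const_lt one_half_lt_one).exists
  have hnonempty := ((tendsto_cdf_atBot (μ.map X)).eventually_le_const one_half_pos).exists
  exact isLUB_csSup hnonempty ⟨b, fun t ht ↦ not_lt.1 fun hbt ↦
    (hb.trans_le (monotone_cdf _ hbt.le)).not_ge ht⟩

lemma half_le_measureReal_le_medianOf (hX : AEMeasurable X μ) :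
    1 / 2 ≤ μ.real {ω | X ω ≤ medianOf μ X} := by
  have := Measure.isProbabilityMeasure_map hX
  have hmed := isLUB_medianOf hX
  have hright : Tendsto (cdf (μ.map X)) (𝓝[>] (medianOf μ X))
      (𝓝 (cdf (μ.map X) (medianOf μ X))) :=
    ((cdf (μ.map X)).right_continuous _).mono Set.Ioi_subset_Ici_self
  have hhalf : 1 / 2 ≤ cdf (μ.map X) (medianOf μ X) :=
    ge_of_tendsto hright <| eventually_mem_nhdsWithin.mono fun t ht ↦
      (not_le.1 fun h ↦ (hmed.1 h).not_gt ht).le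
  rwa [cdf_eq_real, map_measureReal_apply_of_aemeasurable hX measurableSet_Iic] at hhalf

lemma half_le_measureReal_medianOf_le (hX : AEMeasurable X μ) :
    1 / 2 ≤ μ.real {ω | medianOf μ X ≤ X ω} := by
  have := Measure.isProbabilityMeasure_map hX
  have hmed := isLUB_medianOf hX
  have hleft : Function.leftLim (cdf (μ.map X)) (medianOf μ X) ≤ 1 / 2 :=
    le_of_tendsto ((monotone_cdf _).tendsto_leftLim _) <|
      eventually_mem_nhdsWithin.mono fun t ht ↦ by
        obtain ⟨u, hu, htu⟩ := (lt_isLUB_iff hmed).1 ht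
        exact (monotone_cdf _ htu.le).trans hu
  have hIci := (cdf (μ.map X)).measure_Ici (tendsto_cdf_atTop _) (medianOf μ X)
  rw [measure_cdf, Measure.map_apply_of_aemeasurable hX measurableSet_Ici] at hIci
  change 1 / 2 ≤ (μ (X ⁻¹' Set.Ici (medianOf μ X))).toReal
  rw [hIci, ENNReal.toReal_ofReal (by linarith)]
  linarith

lemma abs_medianOf_le (hX : AEMeasurable X μ) {M : ℝ} (hM : ∀ ω, |X ω| ≤ M) :
    |medianOf μ X| ≤ M := by
  have hnonempty {E : Set α} (hE : 1 / 2 ≤ μ.real E) : E.Nonempty :=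
    nonempty_of_measureReal_ne_zero (by linarith)
  obtain ⟨ω, hω⟩ := hnonempty (half_le_measureReal_le_medianOf hX)
  obtain ⟨ω', hω'⟩ := hnonempty (half_le_measureReal_medianOf_le hX)
  exact abs_le.2 ⟨(abs_le.1 (hM ω)).1.trans hω, hω'.trans (abs_le.1 (hM ω')).2⟩

end Median

section Deviation

variable {α : Type*} [MeasurableSpace α]

lemma integrableOn_Ioi_div_add_sq (C : ℝ) {K : ℝ} (hK : 0 < K) :
    IntegrableOn (fun t ↦ C / (t + K) ^ 2) (Set.Ioi 0) := by
  have hrpow : IntegrableOn (fun t ↦ C * (t + K) ^ (-2 : ℝ)) (Set.Ioi 0) :=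
    (integrableOn_add_rpow_Ioi_of_lt (by norm_num) (neg_lt_zero.2 hK)).const_mul C
  refine IntegrableOn.congr_fun hrpow (fun t (ht : 0 < t) ↦ ?_) measurableSet_Ioi
  simp [Real.rpow_neg (add_pos ht hK).le, div_eq_mul_inv]

lemma integral_Ioi_div_add_sq (C : ℝ) {K : ℝ} (hK : 0 < K) :
    ∫ t in Set.Ioi 0, C / (t + K) ^ 2 = C / K := by
  have hderiv (t : ℝ) (ht : t ∈ Set.Ici 0) :
      HasDerivAt (fun t ↦ -C / (t + K)) (C / (t + K) ^ 2) t := by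
    have hne : t + K ≠ 0 := (add_pos_of_nonneg_of_pos ht hK).ne'
    refine ((hasDerivAt_const t (-C)).div ((hasDerivAt_id t).add_const K) hne).congr_deriv ?_
    simp only [id_eq, zero_mul, mul_one, sub_neg_eq_add, zero_add]
  have hlim : Tendsto (fun t ↦ -C / (t + K)) atTop (𝓝 0) :=
    (tendsto_atTop_add_const_right _ K tendsto_id).const_div_atTop (-C)
  rw [integral_Ioi_of_hasDerivAt_of_tendsto' hderiv (integrableOn_Ioi_div_add_sq C hK) hlim]
  ring

lemma integral_le_of_measureReal_ge_le {ν : Measure α} [IsFiniteMeasure ν] {Y : α → ℝ}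
    (hY : Integrable Y ν) {C K : ℝ} (hK : 0 < K)
    (htail : ∀ t, 0 < t → ν.real {ω | t ≤ Y ω} ≤ C / t ^ 2) :
    ∫ ω, Y ω ∂ν ≤ K * ν.real Set.univ + C / K := by
  have hexcess : Integrable (fun ω ↦ (Y ω - K)⁺) ν := (hY.sub (integrable_const K)).pos_part
  calc ∫ ω, Y ω ∂ν ≤ ∫ ω, K + (Y ω - K)⁺ ∂ν :=
        integral_mono hY ((integrable_const K).add hexcess) fun ω ↦ by
          linarith [le_posPart (Y ω - K)]
    _ = K * ν.real Set.univ + ∫ ω, (Y ω - K)⁺ ∂ν := by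
        rw [integral_add (integrable_const K) hexcess, integral_const, smul_eq_mul, mul_comm]
    _ = K * ν.real Set.univ + ∫ t in Set.Ioi 0, ν.real {ω | t ≤ (Y ω - K)⁺} := by
        rw [hexcess.integral_eq_integral_meas_le (ae_of_all _ fun ω ↦ posPart_nonneg _)]
    _ ≤ K * ν.real Set.univ + ∫ t in Set.Ioi 0, C / (t + K) ^ 2 := by
        refine add_le_add_right ?_ _
        refine integral_mono_of_nonneg (ae_of_all _ fun t ↦ measureReal_nonneg)
          (integrableOn_Ioi_div_add_sq C hK) (ae_restrict_of_forall_mem measurableSet_Ioi ?_)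
        intro t (ht : 0 < t)
        refine (measureReal_mono fun ω hω ↦ ?_).trans (htail (t + K) (by linarith))
        rcases le_max_iff.1 (Set.mem_ofPred.1 hω) with h | h
        · exact (by linarith : t + K ≤ Y ω)
        · exact absurd h ht.not_ge
    _ = K * ν.real Set.univ + C / K := by rw [integral_Ioi_div_add_sq C hK]

lemma abs_integral_sub_le_of_tail_mul_tail {ν : Measure α} [IsFiniteMeasure ν]
    (hν : ν.real Set.univ ≤ 1) {X : α → ℝ} (hX : Integrable X ν) {C q m : ℝ} (hC : 0 < C)
    (hq : 0 < q) (hle : q ≤ ν.real {ω | X ω ≤ m}) (hge : q ≤ ν.real {ω | m ≤ X ω})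
    (htail : ∀ a t, 0 < t →
      ν.real {ω | a + t ≤ X ω} * ν.real {ω | X ω ≤ a} ≤ C / t ^ 2) :
    |∫ ω, (X ω - m) ∂ν| ≤ 2 * √(C / q) := by
  have hK : 0 < √(C / q) := Real.sqrt_pos.2 (by positivity)
  have hbound {Y : α → ℝ} (hY : Integrable Y ν)
      (h : ∀ t, 0 < t → ν.real {ω | t ≤ Y ω} * q ≤ C / t ^ 2) :
      ∫ ω, Y ω ∂ν ≤ 2 * √(C / q) := by
    have := integral_le_of_measureReal_ge_le hY (C := C / q) hK fun t ht ↦ by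
      rw [div_right_comm, le_div_iff₀ hq]; exact h t ht
    rw [Real.div_sqrt] at this
    nlinarith
  have hXm : Integrable (fun ω ↦ X ω - m) ν := hX.sub (integrable_const m)
  refine abs_le'.2 ⟨hbound hXm fun t ht ↦ ?_, ?_⟩
  · calc ν.real {ω | t ≤ X ω - m} * q
      _ ≤ ν.real {ω | m + t ≤ X ω} * ν.real {ω | X ω ≤ m} := by
        simp only [le_sub_iff_add_le']; gcongr
      _ ≤ C / t ^ 2 := htail m t ht
  · rw [← integral_neg]
    refine hbound hXm.neg fun t ht ↦ ?_
    calc ν.real {ω | t ≤ -(X ω - m)} * q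
      _ ≤ ν.real {ω | X ω ≤ m - t} * ν.real {ω | m - t + t ≤ X ω} := by
        simp only [neg_sub, le_sub_comm, sub_add_cancel]; gcongr
      _ ≤ C / t ^ 2 := by rw [mul_comm]; exact htail (m - t) t ht

lemma abs_setIntegral_sub_medianOf_le {μ : Measure α} [IsProbabilityMeasure μ] {X : α → ℝ}
    (hX : Integrable X μ) {G : Set α} (hG : MeasurableSet G) (hsmall : μ.real Gᶜ ≤ 1 / 4)
    {C : ℝ} (hC : 0 < C)
    (htail : ∀ a t, 0 < t → (μ.restrict G).real {ω | a + t ≤ X ω} *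
      (μ.restrict G).real {ω | X ω ≤ a} ≤ C / t ^ 2) :
    |∫ ω in G, (X ω - medianOf μ X) ∂μ| ≤ 4 * √C := by
  have hquarter {E : Set α} (hE : 1 / 2 ≤ μ.real E) : 1 / 4 ≤ (μ.restrict G).real E := by
    have hdiff := le_measureReal_sdiff (μ := μ) (s₁ := E) (s₂ := Gᶜ)
    rw [Set.sdiff_compl, ← measureReal_restrict_apply' hG] at hdiff
    linarith
  have hsqrt : √(C / (1 / 4)) = 2 * √C := by
    rw [show C / (1 / 4) = 2 ^ 2 * C by ring, Real.sqrt_mul (by positivity),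
      Real.sqrt_sq zero_le_two]
  calc |∫ ω in G, (X ω - medianOf μ X) ∂μ|
    _ ≤ 2 * √(C / (1 / 4)) :=
      abs_integral_sub_le_of_tail_mul_tail (by simp) hX.restrict hC (by norm_num)
        (hquarter (half_le_measureReal_le_medianOf hX.aemeasurable))
        (hquarter (half_le_measureReal_medianOf_le hX.aemeasurable)) htail
    _ = 4 * √C := by rw [hsqrt]; ring

theorem abs_integral_sub_medianOf_le {μ : Measure α} [IsProbabilityMeasure μ] {X : α → ℝ}
    (hX : AEMeasurable X μ) {M : ℝ} (hM : ∀ ω, |X ω| ≤ M) {G : Set α} (hG : MeasurableSet G)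
    {C : ℝ} (hC : 0 < C)
    (htail : ∀ a t, 0 < t → (μ.restrict G).real {ω | a + t ≤ X ω} *
      (μ.restrict G).real {ω | X ω ≤ a} ≤ C / t ^ 2) :
    |∫ ω, X ω ∂μ - medianOf μ X| ≤ 4 * √C + 8 * M * μ.real Gᶜ := by
  set m := medianOf μ X
  have hmM : |m| ≤ M := abs_medianOf_le hX hM
  have hM0 : 0 ≤ M := (abs_nonneg m).trans hmM
  have hdev (ω : α) : ‖X ω - m‖ ≤ 2 * M :=
    (norm_sub_le _ _).trans ((add_le_add (hM ω) hmM).trans_eq (two_mul M).symm)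
  have hX' : Integrable X μ := .of_bound hX.aestronglyMeasurable M (ae_of_all _ hM)
  have hXm : Integrable (fun ω ↦ X ω - m) μ := hX'.sub (integrable_const m)
  have hmean : ∫ ω, X ω ∂μ - m = ∫ ω, (X ω - m) ∂μ := by
    rw [integral_sub hX' (integrable_const m), integral_const, probReal_univ, one_smul]
  rw [hmean]
  rcases le_total (1 / 4) (μ.real Gᶜ) with hlarge | hsmall
  · calc |∫ ω, (X ω - m) ∂μ|
      _ ≤ 2 * M := by simpa using norm_integral_le_of_norm_le_const (ae_of_all μ hdev)
      _ = 0 + 8 * M * (1 / 4) := by ring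
      _ ≤ 4 * √C + 8 * M * μ.real Gᶜ := by gcongr; positivity
  · calc |∫ ω, (X ω - m) ∂μ|
      _ = |∫ ω in G, (X ω - m) ∂μ + ∫ ω in Gᶜ, (X ω - m) ∂μ| := by
        rw [integral_add_compl hG hXm]
      _ ≤ |∫ ω in G, (X ω - m) ∂μ| + |∫ ω in Gᶜ, (X ω - m) ∂μ| := abs_add_le _ _
      _ ≤ 4 * √C + 2 * M * μ.real Gᶜ :=
        add_le_add (abs_setIntegral_sub_medianOf_le hX' hG hsmall hC htail)
          (norm_setIntegral_le_of_norm_le_const (measure_lt_top _ _) fun ω _ ↦ hdev ω)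
      _ ≤ 4 * √C + 8 * M * μ.real Gᶜ := by gcongr; norm_num

end Deviation

section Product

lemma card_mul_measureReal_le_of_ncard_le {α σ : Type*} [MeasurableSpace α] [Fintype σ]
    {μ : Measure α} [IsProbabilityMeasure μ] {T : σ → α → α}
    (hT : ∀ j, MeasurePreserving (T j) μ μ) {E : Set α} (hE : MeasurableSet E) {C : ℝ}
    (hC : ∀ x, ({j | T j x ∈ E}.ncard : ℝ) ≤ C) :
    Fintype.card σ * μ.real E ≤ C := by
  classical
  have hint (j : σ) : Integrable ((T j ⁻¹' E).indicator (1 : α → ℝ)) μ :=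
    (integrable_const 1).indicator ((hT j).measurable hE)
  calc Fintype.card σ * μ.real E = ∑ j, μ.real (T j ⁻¹' E) := by
        simp [(hT _).measureReal_preimage hE.nullMeasurableSet]
    _ = ∫ x, ∑ j, (T j ⁻¹' E).indicator (1 : α → ℝ) x ∂μ := by
        rw [integral_finsetSum _ fun j _ ↦ hint j]
        simp only [integral_indicator_one ((hT _).measurable hE)]
    _ = ∫ x, ({j | T j x ∈ E}.ncard : ℝ) ∂μ := by
        congr! 2 with x
        rw [Set.ncard_eq_toFinset_card', Set.toFinset_ofPred]
        simp [Set.indicator_apply]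
    _ ≤ ∫ _, C ∂μ := by
        exact integral_mono_of_nonneg (ae_of_all _ fun x ↦ Nat.cast_nonneg _)
          (integrable_const C) (ae_of_all _ hC)
    _ = C := by simp

variable {ι : Type*} {Ω : ι → Type*}

/-- The pair `p` with its coordinates outside `S` exchanged. As `S` varies, the first component runs
over the vertices of the cube spanned by `p.1` and `p.2`, and the second is the antipodal vertex. -/
def exchangeOff [DecidableEq ι] (S : Finset ι) (p : (∀ i, Ω i) × (∀ i, Ω i)) :
    (∀ i, Ω i) × (∀ i, Ω i) :=
  (S.piecewise p.1 p.2, S.piecewise p.2 p.1)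

lemma exchangeOff_preimage_pi_prod_pi [DecidableEq ι] (S : Finset ι) (U V : ∀ i, Set (Ω i)) :
    exchangeOff S ⁻¹' (Set.univ.pi U ×ˢ Set.univ.pi V) =
      Set.univ.pi (S.piecewise U V) ×ˢ Set.univ.pi (S.piecewise V U) := by
  ext p
  simp only [exchangeOff, Set.mem_preimage, Set.mem_prod, Set.mem_univ_pi, ← forall_and]
  refine forall_congr' fun i ↦ ?_
  by_cases h : i ∈ S <;> simp [h, and_comm]

variable [∀ i, MeasurableSpace (Ω i)]

lemma measurable_exchangeOff [DecidableEq ι] (S : Finset ι) :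
    Measurable (exchangeOff (Ω := Ω) S) := by
  refine .prodMk (measurable_pi_iff.2 fun i ↦ ?_) (measurable_pi_iff.2 fun i ↦ ?_) <;>
  · by_cases h : i ∈ S <;> simp only [h, Finset.piecewise_eq_of_mem, Finset.piecewise_eq_of_notMem,
      not_false_eq_true] <;> fun_prop

variable [Fintype ι]

lemma measurePreserving_exchangeOff [DecidableEq ι] (P : ∀ i, Measure (Ω i))
    [∀ i, SigmaFinite (P i)] (S : Finset ι) :
    MeasurePreserving (exchangeOff S) ((Measure.pi P).prod (Measure.pi P))
      ((Measure.pi P).prod (Measure.pi P)) := by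
  refine ⟨measurable_exchangeOff S, Eq.symm ?_⟩
  refine Measure.prod_eq_generateFrom generateFrom_pi generateFrom_pi isPiSystem_pi isPiSystem_pi
    (Measure.FiniteSpanningSetsIn.pi fun i ↦ (P i).toFiniteSpanningSetsIn)
    (Measure.FiniteSpanningSetsIn.pi fun i ↦ (P i).toFiniteSpanningSetsIn) ?_
  rintro _ ⟨U, hU, rfl⟩ _ ⟨V, hV, rfl⟩
  rw [Measure.map_apply (measurable_exchangeOff S)
    ((MeasurableSet.univ_pi fun i ↦ hU i trivial).prod (.univ_pi fun i ↦ hV i trivial)),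
    exchangeOff_preimage_pi_prod_pi, Measure.prod_prod]
  simp only [Measure.pi_pi, ← Finset.prod_mul_distrib]
  refine Finset.prod_congr rfl fun i _ ↦ ?_
  by_cases h : i ∈ S <;> simp [h, mul_comm]

theorem measureReal_mul_measureReal_le_of_certificates {P : ∀ i, Measure (Ω i)}
    [∀ i, IsProbabilityMeasure (P i)] {A B : Set (∀ i, Ω i)} (hA : MeasurableSet A)
    (hB : MeasurableSet B) {s r : ℝ} (hs : 0 ≤ s) (hr : 0 < r)
    (hcert : ∀ ω ∈ B, ∃ I : Finset ι, (#I : ℝ) ≤ s ∧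
      ∀ ω' ∈ A, r ≤ ({i | i ∈ I ∧ ω i ≠ ω' i}.ncard : ℝ)) :
    (Measure.pi P).real B * (Measure.pi P).real A ≤ s / r ^ 2 := by
  classical
  choose! I hIcard hIdist using hcert
  have hfiber (p : (∀ i, Ω i) × (∀ i, Ω i)) :
      ({S | exchangeOff S p ∈ B ×ˢ A}.ncard : ℝ) ≤ Fintype.card (Finset ι) * (s / r ^ 2) := by
    let vertex (S : Finset ι) : ∀ i, Ω i := S.piecewise p.1 p.2
    have hcube := ncard_antipodal_mul_sq_le (I := I ∘ vertex) (A := vertex ⁻¹' A)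
      (B := vertex ⁻¹' B) hs hr.le (fun b hb ↦ hIcard _ hb) fun b hb a ha ↦ by
        refine (hIdist _ hb _ ha).trans (Nat.cast_le.2 ?_)
        rw [← Set.ncard_coe_finset]
        refine Set.ncard_le_ncard (fun i ⟨hi, hne⟩ ↦ ?_) (Finset.finite_toSet _)
        have hia : ¬(i ∈ b ↔ i ∈ a) := fun hiff ↦ hne (by simp [vertex, Finset.piecewise, hiff])
        simp only [Finset.coe_inter, Set.mem_inter_iff, Finset.mem_coe, Finset.mem_symmDiff]
        exact ⟨hi, by tauto⟩
    rw [← mul_div_assoc, le_div_iff₀ (by positivity)]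
    simpa only [exchangeOff, Set.mem_prod, Set.mem_preimage, vertex,
      Finset.piecewise_compl] using hcube
  have havg := card_mul_measureReal_le_of_ncard_le (measurePreserving_exchangeOff P)
    (hB.prod hA) hfiber
  rw [measureReal_prod_prod] at havg
  exact le_of_mul_le_mul_left havg (by positivity)

end Product

theorem measureReal_mul_measureReal_le_of_hasUpwardCertificates {n : ℕ} {Ω : Fin n → Type*}
    [∀ i, MeasurableSpace (Ω i)] {P : ∀ i, Measure (Ω i)} [∀ i, IsProbabilityMeasure (P i)]
    {Ωstar : Set (∀ i, Ω i)} (hΩstar : MeasurableSet Ωstar) {X : (∀ i, Ω i) → ℝ}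
    (hX : Measurable X) {s c : ℝ} (hs : 0 ≤ s) (hc : 0 < c)
    (hcert : HasUpwardCertificates Ωstar X s c) (a : ℝ) {t : ℝ} (ht : 0 < t) :
    ((Measure.pi P).restrict Ωstarᶜ).real {ω | a + t ≤ X ω} *
      ((Measure.pi P).restrict Ωstarᶜ).real {ω | X ω ≤ a} ≤ c ^ 2 * s / t ^ 2 := by
  have hupper : MeasurableSet {ω | a + t ≤ X ω} := measurableSet_le measurable_const hX
  have hlower : MeasurableSet {ω | X ω ≤ a} := measurableSet_le hX measurable_const
  rw [measureReal_restrict_apply hupper, measureReal_restrict_apply hlower]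
  calc _ ≤ s / (t / c) ^ 2 := by
        refine measureReal_mul_measureReal_le_of_certificates (hlower.inter hΩstar.compl)
          (hupper.inter hΩstar.compl) hs (by positivity) fun ω ⟨hω, hω'⟩ ↦ ?_
        obtain ⟨I, hIcard, hI⟩ := hcert t ht ω hω'
        refine ⟨I, hIcard, fun ω' ⟨hω₁, hω₂⟩ ↦ ?_⟩
        by_contra! hclose
        linarith [hI ω' hω₂ hclose, Set.mem_ofPred.1 hω, Set.mem_ofPred.1 hω₁]
    _ = c ^ 2 * s / t ^ 2 := by field_simp

theorem median_close_to_mean_general {n : ℕ} {Ω : Fin n → Type*}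
    [∀ i, MeasurableSpace (Ω i)] (P : ∀ i, Measure (Ω i))
    [∀ i, IsProbabilityMeasure (P i)]
    (Ωstar : Set (∀ i, Ω i)) (hΩstar : MeasurableSet Ωstar)
    (X : (∀ i, Ω i) → ℝ) (hX : Measurable X)
    (M : ℝ) (hM : ∀ ω, |X ω| ≤ M)
    (s c : ℝ) (hs : 0 < s) (hc : 0 < c)
    (hcert : HasUpwardCertificates Ωstar X s c) :
    |(∫ ω, X ω ∂(Measure.pi P)) - medianOf (Measure.pi P) X| ≤
      4 * c * √s + 8 * M * (Measure.pi P).real Ωstar := by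
  have hdev := abs_integral_sub_medianOf_le (μ := Measure.pi P) hX.aemeasurable hM hΩstar.compl
    (by positivity : 0 < c ^ 2 * s) fun a t ht ↦
      measureReal_mul_measureReal_le_of_hasUpwardCertificates hΩstar hX hs.le hc hcert a ht
  rwa [compl_compl, Real.sqrt_mul (sq_nonneg c), Real.sqrt_sq hc.le, ← mul_assoc] at hdev

/-- On a product of `n` probability spaces, if `X` is a bounded random variable with
upward `(s,c)`-certificates with respect to the exceptional set `Ωstar`, `c ≥ 1` and
`M = max {sup|X|, 1}`, then `|E[X] − med(X)| ≤ 20·c·√s + 20·M²·P[Ωstar]`. -/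
theorem median_close_to_mean {n : ℕ} {Ω : Fin n → Type*}
    [∀ i, MeasurableSpace (Ω i)] (P : ∀ i, Measure (Ω i))
    [∀ i, IsProbabilityMeasure (P i)]
    (Ωstar : Set (∀ i, Ω i)) (hΩstar : MeasurableSet Ωstar)
    (X : (∀ i, Ω i) → ℝ) (hX : Measurable X)
    (hbdd : BddAbove (Set.range fun ω => |X ω|))
    (M : ℝ) (hM : M = max (⨆ ω, |X ω|) 1)
    (s c : ℝ) (hs : 0 < s) (hc : 1 ≤ c)
    (hcert : HasUpwardCertificates Ωstar X s c) :
    |(∫ ω, X ω ∂(Measure.pi P)) - medianOf (Measure.pi P) X| ≤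
      20 * c * Real.sqrt s + 20 * M ^ 2 * ((Measure.pi P) Ωstar).toReal := by
  have hM1 : 1 ≤ M := hM ▸ le_max_right _ _
  have hXM (ω : ∀ i, Ω i) : |X ω| ≤ M := (le_ciSup hbdd ω).trans (hM ▸ le_max_left _ _)
  calc _ ≤ 4 * c * √s + 8 * M * (Measure.pi P).real Ωstar :=
        median_close_to_mean_general P Ωstar hΩstar X hX M hXM s c hs (by linarith) hcert
    _ ≤ 20 * c * √s + 20 * M ^ 2 * (Measure.pi P).real Ωstar := by
        gcongr
        · norm_num
        · norm_num
        · exact le_self_pow₀ hM1 two_ne_zero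
end

section
/- Let (Ω_i, Σ_i, P_i), i = 1,…,n, be probability spaces and let (Ω, Σ, P) be their product space. Let Ω* ⊆ Ω be a set of exceptional events, let X : Ω → ℝ be a random variable, let M = max{sup|X|, 1}, and let c ≥ 1. If X has upward (s,c)-certificates with respect to Ω*, then for every t ≥ 0: P[ |X − E[X]| ≥ t + 20·c·√s + 20·M²·P[Ω*] ] ≤ 4·e^{−t²/(4c²s)} + 4·P[Ω*]. -/
/-!
A certificate for `ω` says that, off `Ωstar`, every point at which `X` is lower than at `ω` by `t`
differs from `ω` in at least `t / c` of the at most `s` coordinates of `I`. With weight `1 / √s` on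
`I`, this puts `ω` at Talagrand's convex distance at least `t / (c √s)` from that set of points, so
Talagrand's inequality `P(A) P(B) ≤ exp (-d² / 4)` for sets at convex distance `d` bounds the
product of the probabilities of `X ≤ a` and `X ≥ a + t` outside `Ωstar`. When `a` or `a + t` is a
median, one of the two probabilities is at least `1 / 2 - P(Ωstar)`, which gives Gaussian tails
around the median; integrating these tails bounds the distance from the median to the mean.

Talagrand's inequality is proved in the dual, exponential form
`∫ exp (Q φ) dP · ∫ exp (-φ) dP ≤ 1`, where `Q φ` is the infimum convolution of `φ` with the convex
distance cost, by induction on the number of coordinates. One coordinate is integrated out at a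
time, and the scalar input is that for every `v ≥ 0` some `l ∈ [0, 1]` satisfies
`exp (l v + (1 - l)² / 4) ≤ 2 - exp (-v)`.
-/

open MeasureTheory

open Filter Topology ENNReal

section WeightedHamming

variable {ι : Type*} [Fintype ι] {Ω : ι → Type*}

open Classical in
/-- The Hamming distance between `ω` and `ω'` in which a disagreement in coordinate `i` costs
`b i`; the weights may be negative. -/
noncomputable def weightedHammingDist (b : ι → ℝ) (ω ω' : ∀ i, Ω i) : ℝ :=
  ∑ i, if ω i ≠ ω' i then b i else 0

lemma weightedHammingDist_self (b : ι → ℝ) (ω : ∀ i, Ω i) : weightedHammingDist b ω ω = 0 := by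
  simp [weightedHammingDist]

lemma weightedHammingDist_nonneg {b : ι → ℝ} (hb : ∀ i, 0 ≤ b i) (ω ω' : ∀ i, Ω i) :
    0 ≤ weightedHammingDist b ω ω' :=
  Finset.sum_nonneg fun i _ => by split_ifs; exacts [hb i, le_rfl]

lemma weightedHammingDist_const_mul (a : ℝ) (b : ι → ℝ) (ω ω' : ∀ i, Ω i) :
    weightedHammingDist (fun i => a * b i) ω ω' = a * weightedHammingDist b ω ω' := by
  simp only [weightedHammingDist, Finset.mul_sum, mul_ite, mul_zero]

lemma neg_sum_abs_le_weightedHammingDist (b : ι → ℝ) (ω ω' : ∀ i, Ω i) :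
    -∑ i, |b i| ≤ weightedHammingDist b ω ω' := by
  rw [← Finset.sum_neg_distrib]
  refine Finset.sum_le_sum fun i _ => ?_
  split_ifs
  exacts [neg_abs_le _, neg_nonpos.2 (abs_nonneg _)]

lemma weightedHammingDist_ite_mem (I : Finset ι) [DecidablePred (· ∈ I)] (a : ℝ)
    (ω ω' : ∀ i, Ω i) :
    weightedHammingDist (fun i => if i ∈ I then a else 0) ω ω' =
      {i | i ∈ I ∧ ω i ≠ ω' i}.ncard * a := by
  classical
  simp only [weightedHammingDist, ← ite_and, Set.ncard_eq_toFinset_card', Set.toFinset_ofPred,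
    ← Finset.sum_filter, Finset.sum_const, nsmul_eq_mul, and_comm]

open Classical in
lemma weightedHammingDist_insertNth {n : ℕ} {Ω : Fin (n + 1) → Type*} (b : Fin (n + 1) → ℝ)
    (p : Fin (n + 1)) (x y : Ω p) (ω ω' : ∀ j, Ω (p.succAbove j)) :
    weightedHammingDist b (p.insertNth x ω) (p.insertNth y ω') =
      (if x ≠ y then b p else 0) + weightedHammingDist (fun j => b (p.succAbove j)) ω ω' := by
  simp only [weightedHammingDist, Fin.sum_univ_succAbove _ p, Fin.insertNth_apply_same,
    Fin.insertNth_apply_succAbove]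

/-- The infimum convolution of `φ` with the convex-distance cost,
`inf_ν (∫ φ dν + ¼ ∑ᵢ ν(ω'ᵢ ≠ ωᵢ)²)` over probability measures `ν`, in its minimax-dual form: since
`p² / 4 = sup_b (b p - b²)`, the infimum over measures becomes an infimum over points. -/
noncomputable def convexInfConv (φ : (∀ i, Ω i) → ℝ) (ω : ∀ i, Ω i) : ℝ :=
  ⨆ b : ι → ℝ, ⨅ ω', φ ω' + weightedHammingDist b ω ω' - ∑ i, b i ^ 2

variable {φ : (∀ i, Ω i) → ℝ} {C : ℝ}

lemma bddBelow_range_add_weightedHammingDist (hφ : ∀ ω, |φ ω| ≤ C) (b : ι → ℝ) (ω : ∀ i, Ω i) :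
    BddBelow (Set.range fun ω' => φ ω' + weightedHammingDist b ω ω' - ∑ i, b i ^ 2) := by
  refine ⟨-C - ∑ i, |b i| - ∑ i, b i ^ 2, ?_⟩
  rintro _ ⟨ω', rfl⟩
  linarith [neg_le_of_abs_le (hφ ω'), neg_sum_abs_le_weightedHammingDist b ω ω']

lemma convexInfConv_le (hφ : ∀ ω, |φ ω| ≤ C) {ω : ∀ i, Ω i} {z : ℝ}
    (h : ∀ (b : ι → ℝ) (r : ℝ),
      (∀ ω', r ≤ φ ω' + weightedHammingDist b ω ω' - ∑ i, b i ^ 2) → r ≤ z) :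
    convexInfConv φ ω ≤ z :=
  ciSup_le fun b => h b _ fun ω' => ciInf_le (bddBelow_range_add_weightedHammingDist hφ b ω) ω'

lemma convexInfConv_le_self (hφ : ∀ ω, |φ ω| ≤ C) (ω : ∀ i, Ω i) : convexInfConv φ ω ≤ φ ω :=
  convexInfConv_le hφ fun b r hr => by
    have := hr ω
    rw [weightedHammingDist_self] at this
    linarith [Finset.sum_nonneg fun i (_ : i ∈ Finset.univ) => sq_nonneg (b i)]

lemma le_convexInfConv (hφ : ∀ ω, |φ ω| ≤ C) (b : ι → ℝ) {ω : ∀ i, Ω i} {r : ℝ}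
    (h : ∀ ω', r ≤ φ ω' + weightedHammingDist b ω ω' - ∑ i, b i ^ 2) :
    r ≤ convexInfConv φ ω := by
  have : Nonempty (∀ i, Ω i) := ⟨ω⟩
  refine le_ciSup_of_le ⟨φ ω, ?_⟩ b (le_ciInf h)
  rintro _ ⟨b', rfl⟩
  refine (ciInf_le (bddBelow_range_add_weightedHammingDist hφ b' ω) ω).trans ?_
  rw [weightedHammingDist_self]
  linarith [Finset.sum_nonneg fun i (_ : i ∈ Finset.univ) => sq_nonneg (b' i)]

/-- The bound given by the transport that moves coordinate `p` from `x` to `y` with probability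
`1 - l`, at cost `(1 - l)² / 4`. -/
lemma convexInfConv_insertNth_le {n : ℕ} {Ω : Fin (n + 1) → Type*} {φ : (∀ i, Ω i) → ℝ} {C : ℝ}
    (hφ : ∀ ω, |φ ω| ≤ C) (p : Fin (n + 1)) (x y : Ω p) (ω : ∀ j, Ω (p.succAbove j)) {l : ℝ}
    (hl₀ : 0 ≤ l) (hl₁ : l ≤ 1) :
    convexInfConv φ (p.insertNth x ω) ≤
      l * convexInfConv (fun ω' => φ (p.insertNth x ω')) ω +
        (1 - l) * convexInfConv (fun ω' => φ (p.insertNth y ω')) ω + (1 - l) ^ 2 / 4 := by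
  classical
  refine convexInfConv_le hφ fun b r hr => ?_
  have section_le (z : Ω p) : r + b p ^ 2 - (if x ≠ z then b p else 0) ≤
      convexInfConv (fun ω' => φ (p.insertNth z ω')) ω := by
    refine le_convexInfConv (fun ω' => hφ _) (fun j => b (p.succAbove j)) fun ω' => ?_
    have := hr (p.insertNth z ω')
    rw [weightedHammingDist_insertNth, Fin.sum_univ_succAbove _ p] at this
    linarith
  have hx := mul_le_mul_of_nonneg_left (section_le x) hl₀
  have hy := mul_le_mul_of_nonneg_left (section_le y) (sub_nonneg.2 hl₁)
  simp only [ne_eq, not_true_eq_false, if_false] at hx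
  split_ifs at hy
  · nlinarith [sq_nonneg (b p - (1 - l) / 2)]
  · nlinarith [sq_nonneg (b p), sq_nonneg (1 - l)]

end WeightedHamming

section FreeEnergy

variable {α β : Type*} [MeasurableSpace α] [MeasurableSpace β]

/-- The free energy `-log ∫ exp (-φ) dμ`, so that `exp (-freeEnergy μ φ)` is the integral of
`exp (-φ)`. -/
noncomputable def freeEnergy (μ : Measure α) (φ : α → ℝ) : ℝ :=
  -Real.log (∫ x, Real.exp (-φ x) ∂μ)

variable {μ : Measure α} {φ : α → ℝ} {C : ℝ}

lemma integrable_exp_neg [IsFiniteMeasure μ] (hφ : Measurable φ) (hC : ∀ x, |φ x| ≤ C) :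
    Integrable (fun x => Real.exp (-φ x)) μ :=
  Integrable.of_bound (by fun_prop) (Real.exp C) <| .of_forall fun x => by
    rw [Real.norm_eq_abs, Real.abs_exp]
    exact Real.exp_le_exp.2 (neg_le.1 (neg_le_of_abs_le (hC x)))

variable [IsProbabilityMeasure μ]

lemma exp_neg_freeEnergy (hφ : Measurable φ) (hC : ∀ x, |φ x| ≤ C) :
    Real.exp (-freeEnergy μ φ) = ∫ x, Real.exp (-φ x) ∂μ := by
  rw [freeEnergy, neg_neg, Real.exp_log (integral_exp_pos (integrable_exp_neg hφ hC))]

lemma abs_freeEnergy_le (hφ : Measurable φ) (hC : ∀ x, |φ x| ≤ C) : |freeEnergy μ φ| ≤ C := by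
  have hint := integrable_exp_neg (μ := μ) hφ hC
  have upper : Real.exp (-freeEnergy μ φ) ≤ Real.exp C := by
    simpa [exp_neg_freeEnergy hφ hC] using integral_mono hint (integrable_const (Real.exp C))
      fun x => Real.exp_le_exp.2 (neg_le.1 (neg_le_of_abs_le (hC x)))
  have lower : Real.exp (-C) ≤ Real.exp (-freeEnergy μ φ) := by
    simpa [exp_neg_freeEnergy hφ hC] using integral_mono (integrable_const (Real.exp (-C))) hint
      fun x => Real.exp_le_exp.2 (neg_le_neg (le_of_abs_le (hC x)))
  exact abs_le.2 ⟨neg_le.1 (Real.exp_le_exp.1 upper), neg_le_neg_iff.1 (Real.exp_le_exp.1 lower)⟩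

lemma measureReal_le_exp_neg_freeEnergy (hφ : Measurable φ) (hC : ∀ x, |φ x| ≤ C) {s : Set α}
    (hs : MeasurableSet s) (hφs : ∀ x ∈ s, φ x ≤ 0) : μ.real s ≤ Real.exp (-freeEnergy μ φ) := by
  rw [exp_neg_freeEnergy hφ hC, ← integral_indicator_one hs]
  refine integral_mono ((integrable_const _).indicator hs) (integrable_exp_neg hφ hC) ?_
  refine Set.indicator_le' (fun x hx => ?_) fun x _ => (Real.exp_pos _).le
  exact Real.one_le_exp (neg_nonneg.2 (hφs x hx))

variable {ν : Measure β} {ψ : α × β → ℝ}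

lemma measurable_freeEnergy_prod [SFinite ν] (hψ : Measurable ψ) :
    Measurable fun x => freeEnergy ν fun y => ψ (x, y) :=
  (Real.measurable_log.comp
    (StronglyMeasurable.integral_prod_right' (f := fun z => Real.exp (-ψ z))
      (by fun_prop)).measurable).neg

lemma freeEnergy_prod [IsProbabilityMeasure ν] (hψ : Measurable ψ) (hC : ∀ z, |ψ z| ≤ C) :
    freeEnergy (μ.prod ν) ψ = freeEnergy μ fun x => freeEnergy ν fun y => ψ (x, y) := by
  have inner (x : α) : Real.exp (-freeEnergy ν fun y => ψ (x, y)) = ∫ y, Real.exp (-ψ (x, y)) ∂ν :=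
    exp_neg_freeEnergy (by fun_prop) fun y => hC (x, y)
  simp only [freeEnergy.eq_1 μ, freeEnergy.eq_1 (μ.prod ν), inner,
    integral_prod _ (integrable_exp_neg hψ hC)]

end FreeEnergy

lemma le_apply_iInf_of_continuous {κ α γ : Type*} [Nonempty α] [TopologicalSpace γ] [Preorder γ]
    [ClosedIciTopology γ] {φ : κ → α → ℝ} (hφ : ∀ k, BddBelow (Set.range (φ k)))
    {f : (κ → ℝ) → γ} (hf : Continuous f) {c : γ} (h : ∀ y : κ → α, c ≤ f fun k => φ k (y k)) :
    c ≤ f fun k => ⨅ x, φ k x := by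
  choose u _ hu hu_mem using fun k => exists_seq_tendsto_sInf (Set.range_nonempty (φ k)) (hφ k)
  choose y hy using hu_mem
  refine ge_of_tendsto' ((hf.tendsto _).comp (tendsto_pi_nhds.2 hu)) fun n => ?_
  simpa only [Function.comp_apply, hy] using h fun k => y k n

section OneCoordinate

lemma exp_sub_sq_add_exp_neg_le_two {v : ℝ} (hv₀ : 0 ≤ v) (hv₄ : v ≤ 4) :
    Real.exp (v - v ^ 2) + Real.exp (-v) ≤ 2 := by
  have hsq : (v - v ^ 2 / 2) ^ 2 ≤ v ^ 2 := by
    nlinarith [mul_nonneg (pow_nonneg hv₀ 3) (sub_nonneg.2 hv₄)]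
  calc Real.exp (v - v ^ 2) + Real.exp (-v)
      = 2 * (Real.exp (-(v ^ 2 / 2)) * Real.cosh (v - v ^ 2 / 2)) := by
        rw [Real.cosh_eq, mul_div_assoc', mul_div_cancel₀ _ two_ne_zero, mul_add, ← Real.exp_add,
          ← Real.exp_add]
        ring_nf
    _ ≤ 2 * (Real.exp (-(v ^ 2 / 2)) * Real.exp (v ^ 2 / 2)) := by
        gcongr
        exact (Real.cosh_le_exp_half_sq _).trans (by gcongr)
    _ = 2 := by rw [← Real.exp_add, neg_add_cancel, Real.exp_zero, mul_one]

lemma exists_exp_mul_add_sq_le_two_sub_exp_neg {v : ℝ} (hv : 0 ≤ v) :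
    ∃ l : ℝ, 0 ≤ l ∧ l ≤ 1 ∧ Real.exp (l * v + (1 - l) ^ 2 / 4) ≤ 2 - Real.exp (-v) := by
  rcases le_total v (1 / 2) with hv' | hv'
  · refine ⟨1 - 2 * v, by linarith, by linarith, ?_⟩
    rw [show (1 - 2 * v) * v + (1 - (1 - 2 * v)) ^ 2 / 4 = v - v ^ 2 by ring]
    linarith [exp_sub_sq_add_exp_neg_le_two hv (by linarith)]
  · refine ⟨0, le_rfl, zero_le_one, ?_⟩
    have at_half := exp_sub_sq_add_exp_neg_le_two (v := 1 / 2) (by norm_num) (by norm_num)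
    have anti : Real.exp (-v) ≤ Real.exp (-(1 / 2)) := Real.exp_le_exp.2 (neg_le_neg hv')
    norm_num at at_half ⊢
    linarith

variable {κ : Type*} [Fintype κ] {w : κ → ℝ}

lemma ofReal_exp_sum_mul (hw : ∀ k, 0 ≤ w k) (z : κ → ℝ) :
    ENNReal.ofReal (Real.exp (∑ k, w k * z k)) =
      ∏ k, ENNReal.ofReal (Real.exp (z k)) ^ w k := by
  rw [Real.exp_sum, ENNReal.ofReal_prod_of_nonneg fun _ _ => (Real.exp_pos _).le]
  refine Finset.prod_congr rfl fun k _ => ?_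
  rw [ENNReal.ofReal_rpow_of_nonneg (Real.exp_pos _).le (hw k), ← Real.exp_mul, mul_comm]

variable {α : Type*} [MeasurableSpace α] {μ : Measure α} [IsProbabilityMeasure μ] {C : ℝ}

lemma lintegral_exp_mul_two_sub_exp_le {φ : α → ℝ} (hφ : Measurable φ) (hC : ∀ x, |φ x| ≤ C)
    {m : ℝ} (hm : ∀ x, m ≤ φ x) :
    ∫⁻ x, ENNReal.ofReal (Real.exp m * (2 - Real.exp (m - φ x))) ∂μ ≤
      ENNReal.ofReal (Real.exp (freeEnergy μ φ)) := by
  have hint := integrable_exp_neg (μ := μ) hφ hC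
  have hsplit (x : α) : Real.exp (m - φ x) = Real.exp m * Real.exp (-φ x) := by
    rw [sub_eq_add_neg, Real.exp_add]
  have hnonneg (x : α) : 0 ≤ Real.exp m * (2 - Real.exp (m - φ x)) :=
    mul_nonneg (Real.exp_pos m).le
      (by linarith [Real.exp_le_one_iff.2 (sub_nonpos.2 (hm x))])
  simp only [hsplit] at hnonneg ⊢
  rw [← ofReal_integral_eq_lintegral_ofReal (by fun_prop) (.of_forall hnonneg)]
  refine ENNReal.ofReal_le_ofReal ?_
  rw [integral_const_mul, integral_sub (by fun_prop) (by fun_prop), integral_const_mul,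
    ← exp_neg_freeEnergy hφ hC, integral_const, probReal_univ, one_smul, Real.exp_neg]
  set F := Real.exp (freeEnergy μ φ)
  have hF : 0 < F := Real.exp_pos _
  rw [← sub_nonneg]
  have : F - Real.exp m * (2 - Real.exp m * F⁻¹) = (F - Real.exp m) ^ 2 * F⁻¹ := by
    field_simp
    ring
  rw [this]
  positivity

lemma lintegral_le_exp_sum_freeEnergy (hw : ∀ k, 0 ≤ w k) (hw₁ : ∑ k, w k = 1) {φ : κ → α → ℝ}
    (hφ : ∀ k, Measurable (φ k)) (hC : ∀ k x, |φ k x| ≤ C) {m : κ → ℝ} (hm : ∀ k x, m k ≤ φ k x)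
    {g : α → ℝ≥0∞}
    (hg : ∀ x, ∀ l : κ → ℝ, (∀ k, 0 ≤ l k) → (∀ k, l k ≤ 1) →
      g x ≤ ENNReal.ofReal
        (Real.exp (∑ k, w k * (l k * φ k x + (1 - l k) * m k + (1 - l k) ^ 2 / 4)))) :
    ∫⁻ x, g x ∂μ ≤ ENNReal.ofReal (Real.exp (∑ k, w k * freeEnergy μ (φ k))) := by
  have pointwise (x : α) :
      g x ≤ ∏ k, ENNReal.ofReal (Real.exp (m k) * (2 - Real.exp (m k - φ k x))) ^ w k := by
    choose l hl₀ hl₁ hl using fun k =>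
      exists_exp_mul_add_sq_le_two_sub_exp_neg (sub_nonneg.2 (hm k x))
    refine (hg x l hl₀ hl₁).trans ?_
    rw [ofReal_exp_sum_mul hw]
    refine Finset.prod_le_prod' fun k _ => ENNReal.rpow_le_rpow (ENNReal.ofReal_le_ofReal ?_) (hw k)
    calc Real.exp (l k * φ k x + (1 - l k) * m k + (1 - l k) ^ 2 / 4)
        = Real.exp (m k) * Real.exp (l k * (φ k x - m k) + (1 - l k) ^ 2 / 4) := by
          rw [← Real.exp_add]
          ring_nf
      _ ≤ Real.exp (m k) * (2 - Real.exp (m k - φ k x)) := by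
          rw [← neg_sub (φ k x)]
          gcongr
          exact hl k
  calc ∫⁻ x, g x ∂μ
      ≤ ∫⁻ x, ∏ k, ENNReal.ofReal (Real.exp (m k) * (2 - Real.exp (m k - φ k x))) ^ w k ∂μ :=
        lintegral_mono pointwise
    _ ≤ ∏ k, (∫⁻ x, ENNReal.ofReal (Real.exp (m k) * (2 - Real.exp (m k - φ k x))) ∂μ) ^ w k :=
        lintegral_prod_norm_pow_le _ (fun k _ => by fun_prop) hw₁ fun k _ => hw k
    _ ≤ ∏ k, ENNReal.ofReal (Real.exp (freeEnergy μ (φ k))) ^ w k :=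
        Finset.prod_le_prod' fun k _ => ENNReal.rpow_le_rpow
          (lintegral_exp_mul_two_sub_exp_le (hφ k) (hC k) (hm k)) (hw k)
    _ = ENNReal.ofReal (Real.exp (∑ k, w k * freeEnergy μ (φ k))) :=
        (ofReal_exp_sum_mul hw _).symm

end OneCoordinate

section Product

variable {n : ℕ} {Ω : Fin (n + 1) → Type*} [∀ i, MeasurableSpace (Ω i)]
  (P : ∀ i, Measure (Ω i)) (p : Fin (n + 1))

lemma measurable_insertNth :
    Measurable fun z : Ω p × (∀ j, Ω (p.succAbove j)) => (p.insertNth z.1 z.2 : ∀ i, Ω i) :=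
  (MeasurableEquiv.piFinSuccAbove Ω p).symm.measurable

lemma lintegral_pi_le_lintegral_insertNth [∀ i, SigmaFinite (P i)] (f : (∀ i, Ω i) → ℝ≥0∞) :
    ∫⁻ ω, f ω ∂Measure.pi P ≤
      ∫⁻ x, ∫⁻ ω, f (p.insertNth x ω) ∂Measure.pi (fun j => P (p.succAbove j)) ∂P p := by
  rw [← (measurePreserving_piFinSuccAbove P p).symm.lintegral_comp_emb
    (MeasurableEquiv.measurableEmbedding _)]
  exact lintegral_prod_le _

lemma freeEnergy_pi_insertNth [∀ i, IsProbabilityMeasure (P i)] {φ : (∀ i, Ω i) → ℝ}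
    (hφ : Measurable φ) {C : ℝ} (hC : ∀ ω, |φ ω| ≤ C) :
    freeEnergy (Measure.pi P) φ = freeEnergy (P p) fun x =>
      freeEnergy (Measure.pi fun j => P (p.succAbove j)) fun ω => φ (p.insertNth x ω) := by
  have hprod : freeEnergy (Measure.pi P) φ =
      freeEnergy ((P p).prod (Measure.pi fun j => P (p.succAbove j)))
        fun z => φ (p.insertNth z.1 z.2) := by
    rw [freeEnergy, freeEnergy, ← (measurePreserving_piFinSuccAbove P p).symm.integral_comp
      (MeasurableEquiv.measurableEmbedding _)]
    rfl
  exact hprod.trans (freeEnergy_prod (hφ.comp (measurable_insertNth p)) fun z => hC _)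

end Product

section Interpolation

variable {κ : Type*}

/-- The weights on `κ × Bool` obtained from weights `w` on `κ` by giving a proportion `l k` of `w k`
to `(k, true)` and the rest to `(k, false)`. -/
def interpolationWeight (w l : κ → ℝ) (q : κ × Bool) : ℝ :=
  w q.1 * cond q.2 (l q.1) (1 - l q.1)

variable {w l : κ → ℝ}

lemma interpolationWeight_nonneg (hw : ∀ k, 0 ≤ w k) (hl₀ : ∀ k, 0 ≤ l k) (hl₁ : ∀ k, l k ≤ 1)
    (q : κ × Bool) : 0 ≤ interpolationWeight w l q := by
  rcases q with ⟨k, _ | _⟩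
  exacts [mul_nonneg (hw k) (sub_nonneg.2 (hl₁ k)), mul_nonneg (hw k) (hl₀ k)]

variable [Fintype κ]

lemma sum_interpolationWeight_mul (w l : κ → ℝ) (z : κ × Bool → ℝ) :
    ∑ q, interpolationWeight w l q * z q =
      ∑ k, w k * (l k * z (k, true) + (1 - l k) * z (k, false)) := by
  simp only [interpolationWeight, Fintype.sum_prod_type, Fintype.sum_bool, cond_true, cond_false,
    mul_add, mul_assoc]

lemma sum_interpolationWeight (w l : κ → ℝ) : ∑ q, interpolationWeight w l q = ∑ k, w k := by
  simpa using sum_interpolationWeight_mul w l 1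

lemma ofReal_exp_sum_interpolation (w l e : κ → ℝ) (z : κ × Bool → ℝ) :
    ENNReal.ofReal
        (Real.exp (∑ k, w k * (l k * z (k, true) + (1 - l k) * z (k, false) + e k))) =
      ENNReal.ofReal (Real.exp (∑ k, w k * e k)) *
        ENNReal.ofReal (Real.exp (∑ q, interpolationWeight w l q * z q)) := by
  rw [← ENNReal.ofReal_mul (Real.exp_pos _).le, ← Real.exp_add, sum_interpolationWeight_mul,
    ← Finset.sum_add_distrib]
  simp only [← mul_add, add_comm (e _)]

lemma ofReal_exp_sum_convexInfConv_insertNth_le {n : ℕ} {Ω : Fin (n + 1) → Type*}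
    (hw : ∀ k, 0 ≤ w k) (hl₀ : ∀ k, 0 ≤ l k) (hl₁ : ∀ k, l k ≤ 1) {φ : κ → (∀ i, Ω i) → ℝ} {C : ℝ}
    (hC : ∀ k ω, |φ k ω| ≤ C) (p : Fin (n + 1)) (x : Ω p) (y : κ → Ω p)
    (ω : ∀ j, Ω (p.succAbove j)) :
    ENNReal.ofReal (Real.exp (∑ k, w k * convexInfConv (φ k) (p.insertNth x ω))) ≤
      ENNReal.ofReal (Real.exp (∑ k, w k * ((1 - l k) ^ 2 / 4))) *
        ENNReal.ofReal (Real.exp (∑ q, interpolationWeight w l q *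
          convexInfConv (fun ω' => φ q.1 (p.insertNth (cond q.2 x (y q.1)) ω')) ω)) := by
  rw [← ofReal_exp_sum_interpolation]
  gcongr with k
  exacts [hw k, convexInfConv_insertNth_le (hC k) p x (y k) ω (hl₀ k) (hl₁ k)]

end Interpolation

/-- Since `convexInfConv φ` may fail to be measurable, the integral on the left is a lower integral,
for which Fubini holds as an inequality but Hölder fails. The induction therefore runs over finite
families: the two functions interpolated in one coordinate stay separate members of the family
instead of being merged by Hölder's inequality. -/
theorem lintegral_exp_sum_convexInfConv_le {n : ℕ} {Ω : Fin n → Type*}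
    [∀ i, MeasurableSpace (Ω i)] (P : ∀ i, Measure (Ω i)) [∀ i, IsProbabilityMeasure (P i)]
    {κ : Type*} [Fintype κ] {w : κ → ℝ} (hw : ∀ k, 0 ≤ w k) (hw₁ : ∑ k, w k = 1)
    {φ : κ → (∀ i, Ω i) → ℝ} (hφ : ∀ k, Measurable (φ k)) {C : ℝ} (hC : ∀ k ω, |φ k ω| ≤ C) :
    ∫⁻ ω, ENNReal.ofReal (Real.exp (∑ k, w k * convexInfConv (φ k) ω)) ∂Measure.pi P ≤
      ENNReal.ofReal (Real.exp (∑ k, w k * freeEnergy (Measure.pi P) (φ k))) := by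
  induction n generalizing κ with
  | zero =>
    simp only [freeEnergy, lintegral_unique, integral_unique, measure_univ, mul_one, probReal_univ,
      one_smul, Real.log_exp, neg_neg]
    gcongr with k
    exacts [hw k, convexInfConv_le_self (hC k) _]
  | succ n ih =>
    have hsec (k : κ) (x : Ω 0) : Measurable fun ω => φ k (Fin.insertNth 0 x ω) :=
      (hφ k).comp ((measurable_insertNth 0).comp measurable_prodMk_left)
    set ν := Measure.pi fun j => P (Fin.succAbove 0 j)
    set F : κ → Ω 0 → ℝ := fun k x => freeEnergy ν fun ω => φ k (Fin.insertNth 0 x ω)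
    have hFC (k : κ) (x : Ω 0) : |F k x| ≤ C := abs_freeEnergy_le (hsec k x) fun ω => hC k _
    have hFbdd (k : κ) : BddBelow (Set.range (F k)) :=
      ⟨-C, by rintro _ ⟨x, rfl⟩; exact neg_le_of_abs_le (hFC k x)⟩
    have : Nonempty (Ω 0) := nonempty_of_isProbabilityMeasure (P 0)
    simp only [freeEnergy_pi_insertNth P 0 (hφ _) (hC _)]
    refine (lintegral_pi_le_lintegral_insertNth P 0 _).trans <|
      lintegral_le_exp_sum_freeEnergy hw hw₁
        (fun k => measurable_freeEnergy_prod ((hφ k).comp (measurable_insertNth 0))) hFC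
        (fun k => ciInf_le (hFbdd k)) fun x l hl₀ hl₁ => ?_
    refine le_apply_iInf_of_continuous (f := fun z => ENNReal.ofReal (Real.exp (∑ k, w k *
      (l k * F k x + (1 - l k) * z k + (1 - l k) ^ 2 / 4)))) hFbdd
      (ENNReal.continuous_ofReal.comp (by fun_prop)) fun y => ?_
    refine (lintegral_mono
      (ofReal_exp_sum_convexInfConv_insertNth_le hw hl₀ hl₁ hC 0 x y)).trans ?_
    rw [lintegral_const_mul' _ _ ENNReal.ofReal_ne_top]
    have ih' := ih (fun j => P (Fin.succAbove 0 j))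
      (interpolationWeight_nonneg hw hl₀ hl₁) ((sum_interpolationWeight w l).trans hw₁)
      (fun q => hsec q.1 (cond q.2 x (y q.1))) fun q ω => hC q.1 _
    exact (mul_le_mul_right ih' _).trans_eq (ofReal_exp_sum_interpolation w l _ _).symm

section ConvexDistance

variable {n : ℕ} {Ω : Fin n → Type*}

/-- `FarInConvexDist A ω d` says that Talagrand's convex distance from `ω` to `A` is at least `d`,
as witnessed by nonnegative weights `b` in the Euclidean unit ball. -/
def FarInConvexDist (A : Set (∀ i, Ω i)) (ω : ∀ i, Ω i) (d : ℝ) : Prop :=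
  ∃ b : Fin n → ℝ, (∀ i, 0 ≤ b i) ∧ ∑ i, b i ^ 2 ≤ 1 ∧ ∀ ω' ∈ A, d ≤ weightedHammingDist b ω ω'

lemma FarInConvexDist.le_convexInfConv_indicator {A : Set (∀ i, Ω i)} {ω : ∀ i, Ω i} {d : ℝ}
    (hd : 0 ≤ d) (h : FarInConvexDist A ω d) :
    d ^ 2 / 4 ≤ convexInfConv (Aᶜ.indicator fun _ => d ^ 2 / 2) ω := by
  classical
  obtain ⟨b, hb₀, hb₁, hb⟩ := h
  refine le_convexInfConv (C := d ^ 2 / 2) (fun ω' => ?_) (fun i => d / 2 * b i) fun ω' => ?_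
  · rw [Set.indicator_apply]
    split_ifs
    · rw [abs_of_nonneg (by positivity)]
    · rw [abs_zero]
      positivity
  · have hsum : ∑ i, (d / 2 * b i) ^ 2 ≤ d ^ 2 / 4 := by
      simp only [mul_pow, ← Finset.mul_sum]
      nlinarith [sq_nonneg d]
    rw [weightedHammingDist_const_mul]
    by_cases hω' : ω' ∈ A
    · rw [Set.indicator_of_notMem (Set.notMem_compl_iff.2 hω')]
      nlinarith [hb ω' hω']
    · rw [Set.indicator_of_mem (Set.mem_compl hω')]
      nlinarith [mul_nonneg hd (weightedHammingDist_nonneg hb₀ ω ω')]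

variable [∀ i, MeasurableSpace (Ω i)] (P : ∀ i, Measure (Ω i)) [∀ i, IsProbabilityMeasure (P i)]

lemma exp_mul_measureReal_le_exp_freeEnergy {φ : (∀ i, Ω i) → ℝ} (hφ : Measurable φ) {C : ℝ}
    (hC : ∀ ω, |φ ω| ≤ C) {B : Set (∀ i, Ω i)} (hB : MeasurableSet B) {r : ℝ}
    (hr : ∀ ω ∈ B, r ≤ convexInfConv φ ω) :
    Real.exp r * (Measure.pi P).real B ≤ Real.exp (freeEnergy (Measure.pi P) φ) := by
  set μ := Measure.pi P
  have lower : ENNReal.ofReal (Real.exp r) * μ B ≤ ENNReal.ofReal (Real.exp (freeEnergy μ φ)) := by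
    calc ENNReal.ofReal (Real.exp r) * μ B
        ≤ ∫⁻ ω in B, ENNReal.ofReal (Real.exp (convexInfConv φ ω)) ∂μ := by
          rw [← setLIntegral_const]
          refine setLIntegral_mono' hB fun ω hω => ?_
          gcongr
          exact hr ω hω
      _ ≤ ∫⁻ ω, ENNReal.ofReal (Real.exp (convexInfConv φ ω)) ∂μ := setLIntegral_le_lintegral _ _
      _ ≤ ENNReal.ofReal (Real.exp (freeEnergy μ φ)) := by
          simpa using lintegral_exp_sum_convexInfConv_le P (κ := Unit) (w := 1) (φ := fun _ => φ)
            (fun _ => zero_le_one) (by simp) (fun _ => hφ) fun _ => hC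
  simpa [Measure.real, ENNReal.toReal_mul, (Real.exp_pos _).le] using
    ENNReal.toReal_mono ENNReal.ofReal_ne_top lower

theorem measureReal_mul_measureReal_le_exp_of_farInConvexDist {A B : Set (∀ i, Ω i)}
    (hA : MeasurableSet A) (hB : MeasurableSet B) {d : ℝ} (hd : 0 ≤ d)
    (hAB : ∀ ω ∈ B, FarInConvexDist A ω d) :
    (Measure.pi P).real A * (Measure.pi P).real B ≤ Real.exp (-(d ^ 2 / 4)) := by
  set μ := Measure.pi P
  set φ : (∀ i, Ω i) → ℝ := Aᶜ.indicator fun _ => d ^ 2 / 2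
  have hφ : Measurable φ := measurable_const.indicator hA.compl
  have hφ₀ (ω : ∀ i, Ω i) : 0 ≤ φ ω := Set.indicator_nonneg (fun _ _ => by positivity) ω
  have hC (ω : ∀ i, Ω i) : |φ ω| ≤ d ^ 2 / 2 :=
    (abs_of_nonneg (hφ₀ ω)).trans_le (Set.indicator_le_self' (fun _ _ => by positivity) ω)
  have hA_le : μ.real A ≤ Real.exp (-freeEnergy μ φ) :=
    measureReal_le_exp_neg_freeEnergy hφ hC hA fun ω hω =>
      (Set.indicator_of_notMem (Set.notMem_compl_iff.2 hω) _).le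
  have hB_le : Real.exp (d ^ 2 / 4) * μ.real B ≤ Real.exp (freeEnergy μ φ) :=
    exp_mul_measureReal_le_exp_freeEnergy P hφ hC hB fun ω hω =>
      (hAB ω hω).le_convexInfConv_indicator hd
  calc μ.real A * μ.real B
      = μ.real A * (Real.exp (-(d ^ 2 / 4)) * (Real.exp (d ^ 2 / 4) * μ.real B)) := by
        rw [← mul_assoc (Real.exp _), ← Real.exp_add, neg_add_cancel, Real.exp_zero, one_mul]
    _ ≤ Real.exp (-freeEnergy μ φ) * (Real.exp (-(d ^ 2 / 4)) * Real.exp (freeEnergy μ φ)) := by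
        gcongr
    _ = Real.exp (-(d ^ 2 / 4)) := by
        rw [mul_left_comm, ← Real.exp_add, neg_add_cancel, Real.exp_zero, mul_one]

end ConvexDistance

section Certificates

variable {n : ℕ} {Ω : Fin n → Type*} {X : (∀ i, Ω i) → ℝ} {s c : ℝ}

lemma HasUpwardCertificates.mono {Ω₁ Ω₂ : Set (∀ i, Ω i)} (h : Ω₁ ⊆ Ω₂)
    (hcert : HasUpwardCertificates Ω₁ X s c) : HasUpwardCertificates Ω₂ X s c := fun t ht ω hω => by
  obtain ⟨I, hI, hX⟩ := hcert t ht ω (mt (@h ω) hω)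
  exact ⟨I, hI, fun ω' hω' => hX ω' (mt (@h ω') hω')⟩

variable {Ωstar : Set (∀ i, Ω i)} {t : ℝ}

lemma HasUpwardCertificates.farInConvexDist (hcert : HasUpwardCertificates Ωstar X s c)
    (hs : 0 < s) (ht : 0 < t) {a : ℝ} {ω : ∀ i, Ω i} (hω : ω ∉ Ωstar)
    (hX : a + t ≤ X ω) : FarInConvexDist ({ω' | X ω' ≤ a} \ Ωstar) ω (t / (c * √s)) := by
  classical
  obtain ⟨I, hI, hIX⟩ := hcert t ht ω hω
  refine ⟨fun i => if i ∈ I then (√s)⁻¹ else 0, fun i => by positivity, ?_, ?_⟩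
  · simp only [ite_pow, inv_pow, Real.sq_sqrt hs.le, ne_eq, OfNat.ofNat_ne_zero,
      not_false_eq_true, zero_pow, Finset.sum_ite_mem, Finset.univ_inter, Finset.sum_const,
      nsmul_eq_mul]
    exact (mul_inv_le_iff₀ hs).2 (by rwa [one_mul])
  · rintro ω' ⟨hω'a, hω'⟩
    rw [weightedHammingDist_ite_mem, div_mul_eq_div_div, ← div_eq_mul_inv]
    gcongr
    by_contra! hlt
    linarith [hIX ω' hω' hlt, show X ω' ≤ a from hω'a]

variable [∀ i, MeasurableSpace (Ω i)] (P : ∀ i, Measure (Ω i)) [∀ i, IsProbabilityMeasure (P i)]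

theorem HasUpwardCertificates.measureReal_mul_measureReal_le
    (hcert : HasUpwardCertificates Ωstar X s c) (hΩstar : MeasurableSet Ωstar) (hX : Measurable X)
    (hs : 0 < s) (hc : 0 < c) (ht : 0 < t) (a : ℝ) :
    (Measure.pi P).real ({ω | X ω ≤ a} \ Ωstar) * (Measure.pi P).real ({ω | a + t ≤ X ω} \ Ωstar) ≤
      Real.exp (-(t ^ 2) / (4 * c ^ 2 * s)) := by
  have hdist : (t / (c * √s)) ^ 2 / 4 = t ^ 2 / (4 * c ^ 2 * s) := by
    rw [div_pow, mul_pow, Real.sq_sqrt hs.le, div_div]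
    ring_nf
  rw [neg_div, ← hdist]
  exact measureReal_mul_measureReal_le_exp_of_farInConvexDist P
    ((measurableSet_le hX measurable_const).diff hΩstar)
    ((measurableSet_le measurable_const hX).diff hΩstar) (by positivity)
    fun ω hω => hcert.farInConvexDist hs ht hω.2 hω.1

end Certificates

section Median

variable {α : Type*} [MeasurableSpace α] {μ : Measure α}

/-- `m` is a median of the random variable `X`. Medians need not be unique. -/
def IsMedian (μ : Measure α) (X : α → ℝ) (m : ℝ) : Prop :=
  1 / 2 ≤ μ.real {x | X x ≤ m} ∧ 1 / 2 ≤ μ.real {x | m ≤ X x}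

lemma IsMedian.abs_le {X : α → ℝ} {m M : ℝ} (hm : IsMedian μ X m) (hM : ∀ x, |X x| ≤ M) :
    |m| ≤ M := by
  have exists_mem {s : Set α} (hs : 1 / 2 ≤ μ.real s) : s.Nonempty := by
    refine Set.nonempty_iff_ne_empty.2 ?_
    rintro rfl
    norm_num at hs
  obtain ⟨x, hx⟩ := exists_mem hm.1
  obtain ⟨y, hy⟩ := exists_mem hm.2
  exact _root_.abs_le.2 ⟨(neg_le_of_abs_le (hM x)).trans hx, hy.trans (le_of_abs_le (hM y))⟩

lemma exists_isMedian [IsProbabilityMeasure μ] {X : α → ℝ} (hX : Measurable X) :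
    ∃ m, IsMedian μ X m := by
  have : IsProbabilityMeasure (μ.map X) := Measure.isProbabilityMeasure_map hX.aemeasurable
  set F := ProbabilityTheory.cdf (μ.map X)
  have hF_top : Tendsto F atTop (𝓝 1) := ProbabilityTheory.tendsto_cdf_atTop _
  have hF_bot : Tendsto F atBot (𝓝 0) := ProbabilityTheory.tendsto_cdf_atBot _
  set S : Set ℝ := {a | 1 / 2 ≤ F a}
  have hS : S.Nonempty := (hF_top.eventually_const_le (by norm_num)).exists
  obtain ⟨b, hb⟩ := (hF_bot.eventually_lt_const (show (0 : ℝ) < 1 / 2 by norm_num)).exists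
  have hSb : BddBelow S := ⟨b, fun a ha => (F.mono.reflect_lt (hb.trans_le ha)).le⟩
  have half_le : 1 / 2 ≤ F (sInf S) := by
    rw [← F.iInf_Ioi_eq]
    refine le_ciInf fun a => ?_
    obtain ⟨a', ha', hlt⟩ := exists_lt_of_csInf_lt hS a.2
    exact ha'.trans (F.mono hlt.le)
  have leftLim_le : Function.leftLim F (sInf S) ≤ 1 / 2 :=
    le_of_tendsto (F.mono.tendsto_leftLim _) <| eventually_nhdsWithin_of_forall fun a ha =>
      (not_le.1 (notMem_of_lt_csInf (s := S) ha hSb)).le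
  refine ⟨sInf S, ?_, ?_⟩
  · rwa [ProbabilityTheory.cdf_eq_real, map_measureReal_apply hX measurableSet_Iic] at half_le
  · have := (F.measure_Ici hF_top (sInf S)).ge
    rw [ProbabilityTheory.measure_cdf, Measure.map_apply hX measurableSet_Ici,
      ENNReal.ofReal_le_iff_le_toReal (measure_ne_top _ _)] at this
    exact le_trans (by linarith) this

lemma measureReal_le_of_mul_measureReal_diff_le [IsProbabilityMeasure μ] {A B N : Set α} {e : ℝ}
    (hA : MeasurableSet A) (hAB : Disjoint A B) (hhalf : 1 / 2 ≤ μ.real A)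
    (he : μ.real (A \ N) * μ.real (B \ N) ≤ e) : μ.real B ≤ 2 * e + 2 * μ.real N := by
  have hB : μ.real B ≤ 1 / 2 := by
    have := measureReal_mono (μ := μ) hAB.subset_compl_left
    rw [probReal_compl_eq_one_sub hA] at this
    linarith
  have hA_half : 1 / 2 ≤ μ.real (A \ N) + μ.real N := by
    linarith [le_measureReal_sdiff (μ := μ) (s₁ := A) (s₂ := N)]
  have hBN_half : μ.real (B \ N) ≤ 1 / 2 := (measureReal_mono Set.sdiff_subset).trans hB
  calc μ.real B
      ≤ 2 * (1 / 2 * μ.real (B \ N)) + μ.real N := by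
        linarith [le_measureReal_sdiff (μ := μ) (s₁ := B) (s₂ := N)]
    _ ≤ 2 * ((μ.real (A \ N) + μ.real N) * μ.real (B \ N)) + μ.real N := by gcongr
    _ = 2 * (μ.real (A \ N) * μ.real (B \ N)) + 2 * (μ.real N * μ.real (B \ N)) + μ.real N := by
        ring
    _ ≤ 2 * e + 2 * (μ.real N * (1 / 2)) + μ.real N := by gcongr
    _ = 2 * e + 2 * μ.real N := by ring

end Median

section Tail

variable {α : Type*} [MeasurableSpace α] {μ : Measure α}

lemma integral_le_of_gaussian_tail [IsFiniteMeasure μ] {Y : α → ℝ} (hY : Integrable Y μ) {R : ℝ}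
    (hY₀ : ∀ x, 0 ≤ Y x) (hYR : ∀ x, Y x ≤ R) {a b q : ℝ} (ha : 0 ≤ a) (hb : 0 < b) (hR : 0 ≤ R)
    (htail : ∀ u, 0 < u → μ.real {x | u ≤ Y x} ≤ a * Real.exp (-b * u ^ 2) + q) :
    ∫ x, Y x ∂μ ≤ a * (√(Real.pi / b) / 2) + q * R := by
  have hgauss : Integrable fun u : ℝ => Real.exp (-b * u ^ 2) := integrable_exp_neg_mul_sq hb
  have hmeas : AntitoneOn (fun u => μ.real {x | u ≤ Y x}) (Set.Icc 0 R) := fun u _ v _ huv =>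
    measureReal_mono fun x hx => huv.trans hx
  rw [hY.integral_eq_integral_Ioc_meas_le (.of_forall hY₀) (.of_forall hYR)]
  calc ∫ u in Set.Ioc 0 R, μ.real {x | u ≤ Y x}
      ≤ ∫ u in Set.Ioc 0 R, (a * Real.exp (-b * u ^ 2) + q) :=
        setIntegral_mono_on ((hmeas.integrableOn_isCompact isCompact_Icc).mono_set
            Set.Ioc_subset_Icc_self)
          ((hgauss.integrableOn.const_mul a).add (integrable_const _)) measurableSet_Ioc
          fun u hu => htail u hu.1
    _ = a * (∫ u in Set.Ioc 0 R, Real.exp (-b * u ^ 2)) + q * R := by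
        rw [integral_add (hgauss.integrableOn.const_mul a) (integrable_const _),
          integral_const_mul, setIntegral_const, Real.volume_real_Ioc_of_le hR, sub_zero,
          smul_eq_mul, mul_comm R]
    _ ≤ a * (∫ u in Set.Ioi 0, Real.exp (-b * u ^ 2)) + q * R := by
        gcongr
        · exact .of_forall fun u => (Real.exp_pos _).le
        · exact hgauss.integrableOn
        · exact Set.Ioc_subset_Ioi_self
    _ = a * (√(Real.pi / b) / 2) + q * R := by rw [integral_gaussian_Ioi]

end Tail

section Concentration

variable {n : ℕ} {Ω : Fin n → Type*} [∀ i, MeasurableSpace (Ω i)] (P : ∀ i, Measure (Ω i))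
  [∀ i, IsProbabilityMeasure (P i)] {Ωstar : Set (∀ i, Ω i)} {X : (∀ i, Ω i) → ℝ} {s c m : ℝ}

theorem HasUpwardCertificates.measureReal_le_abs_sub_median_le
    (hcert : HasUpwardCertificates Ωstar X s c) (hX : Measurable X) (hs : 0 < s) (hc : 0 < c)
    (hm : IsMedian (Measure.pi P) X m) {u : ℝ} (hu : 0 ≤ u) :
    (Measure.pi P).real {ω | u ≤ |X ω - m|} ≤
      4 * Real.exp (-(u ^ 2) / (4 * c ^ 2 * s)) + 4 * (Measure.pi P).real Ωstar := by
  set μ := Measure.pi P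
  rcases hu.eq_or_lt with rfl | hu
  · refine measureReal_le_one.trans ?_
    rw [zero_pow two_ne_zero, neg_zero, zero_div, Real.exp_zero]
    linarith [measureReal_nonneg (μ := μ) (s := Ωstar)]
  have product_le (a : ℝ) :=
    (hcert.mono (subset_toMeasurable μ Ωstar)).measureReal_mul_measureReal_le P
      (measurableSet_toMeasurable _ _) hX hs hc hu a
  have real_toMeasurable : μ.real (toMeasurable μ Ωstar) = μ.real Ωstar := by
    simp only [Measure.real, measure_toMeasurable]
  have upper : μ.real {ω | m + u ≤ X ω} ≤
      2 * Real.exp (-(u ^ 2) / (4 * c ^ 2 * s)) + 2 * μ.real Ωstar := by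
    rw [← real_toMeasurable]
    exact measureReal_le_of_mul_measureReal_diff_le (measurableSet_le hX measurable_const)
      (Set.disjoint_left.2 fun ω (h : X ω ≤ m) (h' : m + u ≤ X ω) => by linarith) hm.1
      (product_le m)
  have lower : μ.real {ω | X ω ≤ m - u} ≤
      2 * Real.exp (-(u ^ 2) / (4 * c ^ 2 * s)) + 2 * μ.real Ωstar := by
    rw [← real_toMeasurable]
    refine measureReal_le_of_mul_measureReal_diff_le (measurableSet_le measurable_const hX)
      (Set.disjoint_left.2 fun ω (h : m ≤ X ω) (h' : X ω ≤ m - u) => by linarith) hm.2 ?_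
    rw [mul_comm]
    simpa only [sub_add_cancel] using product_le (m - u)
  calc μ.real {ω | u ≤ |X ω - m|}
      ≤ μ.real ({ω | m + u ≤ X ω} ∪ {ω | X ω ≤ m - u}) := by
        refine measureReal_mono fun ω (h : u ≤ |X ω - m|) => ?_
        exact (le_abs.1 h).imp le_sub_iff_add_le'.1 fun h => show X ω ≤ m - u by linarith
    _ ≤ μ.real {ω | m + u ≤ X ω} + μ.real {ω | X ω ≤ m - u} := measureReal_union_le _ _
    _ ≤ 4 * Real.exp (-(u ^ 2) / (4 * c ^ 2 * s)) + 4 * μ.real Ωstar := by linarith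

theorem HasUpwardCertificates.abs_integral_sub_median_le
    (hcert : HasUpwardCertificates Ωstar X s c) (hX : Measurable X) {M : ℝ} (hM : ∀ ω, |X ω| ≤ M)
    (hs : 0 < s) (hc : 0 < c) (hm : IsMedian (Measure.pi P) X m) :
    |∫ ω, X ω ∂Measure.pi P - m| ≤ 8 * c * √s + 8 * M * (Measure.pi P).real Ωstar := by
  set μ := Measure.pi P
  have hXint : Integrable X μ := .of_bound hX.aestronglyMeasurable M (.of_forall hM)
  have hdev : Integrable (fun ω => |X ω - m|) μ := (hXint.sub (integrable_const m)).abs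
  have hmM : |m| ≤ M := hm.abs_le hM
  have hdevM (ω : ∀ i, Ω i) : |X ω - m| ≤ 2 * M := by
    linarith [abs_sub (X ω) m, hM ω]
  have hsqrt : √(Real.pi / (1 / (4 * c ^ 2 * s))) ≤ 4 * c * √s := by
    rw [Real.sqrt_le_left (by positivity), mul_pow, Real.sq_sqrt hs.le, div_div_eq_mul_div, div_one]
    nlinarith [mul_le_mul_of_nonneg_right Real.pi_le_four (show 0 ≤ 4 * c ^ 2 * s by positivity)]
  calc |∫ ω, X ω ∂μ - m|
      = |∫ ω, (X ω - m) ∂μ| := by simp [integral_sub hXint (integrable_const m)]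
    _ ≤ ∫ ω, |X ω - m| ∂μ := abs_integral_le_integral_abs
    _ ≤ 4 * (√(Real.pi / (1 / (4 * c ^ 2 * s))) / 2) + 4 * μ.real Ωstar * (2 * M) := by
        refine integral_le_of_gaussian_tail hdev (fun ω => abs_nonneg _) hdevM (by norm_num)
          (by positivity) (by linarith [abs_nonneg m]) fun u hu => ?_
        convert hcert.measureReal_le_abs_sub_median_le P hX hs hc hm hu.le using 4
        ring
    _ ≤ 8 * c * √s + 8 * M * μ.real Ωstar := by linarith

theorem talagrand_around_mean_general (hcert : HasUpwardCertificates Ωstar X s c)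
    (hX : Measurable X) {M : ℝ} (hM : ∀ ω, |X ω| ≤ M) (hs : 0 < s) (hc : 0 < c) {t : ℝ}
    (ht : 0 ≤ t) :
    (Measure.pi P).real {ω | t + 8 * c * √s + 8 * M * (Measure.pi P).real Ωstar ≤
        |X ω - ∫ ω', X ω' ∂Measure.pi P|} ≤
      4 * Real.exp (-(t ^ 2) / (4 * c ^ 2 * s)) + 4 * (Measure.pi P).real Ωstar := by
  obtain ⟨m, hm⟩ := exists_isMedian (μ := Measure.pi P) hX
  have hmean := hcert.abs_integral_sub_median_le P hX hM hs hc hm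
  refine (measureReal_mono fun ω hω => ?_).trans
    (hcert.measureReal_le_abs_sub_median_le P hX hs hc hm ht)
  rw [Set.mem_ofPred_eq] at hω ⊢
  linarith [abs_sub_le (X ω) m (∫ ω', X ω' ∂Measure.pi P),
    abs_sub_comm m (∫ ω', X ω' ∂Measure.pi P)]

end Concentration

/-- On a product of `n` probability spaces, if `X` is a bounded random variable with
upward `(s,c)`-certificates with respect to the exceptional set `Ωstar`, `c ≥ 1` and
`M = max {sup|X|, 1}`, then for every `t ≥ 0`,
`P[|X − E[X]| ≥ t + 20·c·√s + 20·M²·P[Ωstar]] ≤ 4·e^{−t²/(4c²s)} + 4·P[Ωstar]`. -/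
theorem talagrand_around_mean {n : ℕ} {Ω : Fin n → Type*}
    [∀ i, MeasurableSpace (Ω i)] (P : ∀ i, Measure (Ω i))
    [∀ i, IsProbabilityMeasure (P i)]
    (Ωstar : Set (∀ i, Ω i)) (hΩstar : MeasurableSet Ωstar)
    (X : (∀ i, Ω i) → ℝ) (hX : Measurable X)
    (hbdd : BddAbove (Set.range fun ω => |X ω|))
    (M : ℝ) (hM : M = max (⨆ ω, |X ω|) 1)
    (s c : ℝ) (hs : 0 < s) (hc : 1 ≤ c)
    (hcert : HasUpwardCertificates Ωstar X s c) (t : ℝ) (ht : 0 ≤ t) :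
    ((Measure.pi P) {ω | t + 20 * c * Real.sqrt s + 20 * M ^ 2 * ((Measure.pi P) Ωstar).toReal
        ≤ |X ω - ∫ ω', X ω' ∂(Measure.pi P)|}).toReal ≤
      4 * Real.exp (-(t ^ 2) / (4 * c ^ 2 * s)) + 4 * ((Measure.pi P) Ωstar).toReal := by
  have hXM (ω : ∀ i, Ω i) : |X ω| ≤ M := hM ▸ (le_ciSup hbdd ω).trans (le_max_left _ _)
  have hM_le_sq : M ≤ M ^ 2 := le_self_pow₀ (hM ▸ le_max_right _ _) two_ne_zero
  have hM₀ : 0 ≤ M := hM ▸ zero_le_one.trans (le_max_right _ _)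
  refine (measureReal_mono (Set.ofPred_subset_ofPred.2 fun ω => le_trans ?_)).trans
    (talagrand_around_mean_general P hcert hX hXM hs (zero_lt_one.trans_le hc) ht)
  rw [Measure.real]
  gcongr <;> norm_num
end

section
/- For every δ ∈ (0, 0.9], the value γ = 0.1827·δ − 0.0778·δ^{3/2} lies in (0,1) and satisfies γ < (δ/(2(1−γ)))·e^{−1/(1−γ)} − (δ^{3/2}/(6(1−γ)²))·e^{−7/(8(1−γ))}. -/
/-!
Comparing the coefficients of `δ` and `δ^{3/2}`, it suffices that `u = 1 / (1 - γ)` satisfies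
`0.1827 < u e^{-u} / 2` and `u² e^{-7u/8} / 6 < 0.0778`. The first expression decreases
for `u ≥ 1` and the second increases for `0 ≤ u ≤ 16/7`, so both need only be checked at the upper
bound `u ≤ 1.11`, that is `γ ≤ 11/111`; this follows from bounding `δ^{3/2}` below by its tangent
line at `δ = 1`.
-/

open Real

/-- For `0 < c` the left side is maximal at `x = n / c`; `h` places `y` between `x` and this
maximiser. -/
theorem pow_mul_exp_neg_mul_le (n : ℕ) {c x y : ℝ} (hx : 0 ≤ x) (hy : 0 < y)
    (h : (x - y) * (n - c * y) ≤ 0) :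
    x ^ n * exp (-(c * x)) ≤ y ^ n * exp (-(c * y)) := by
  have ratio_le : x / y ≤ exp (x / y - 1) := by linarith [add_one_le_exp (x / y - 1)]
  have pow_le : x ^ n ≤ y ^ n * exp (n * (x / y - 1)) := calc
    x ^ n = y ^ n * (x / y) ^ n := by rw [← mul_pow, mul_div_cancel₀ x hy.ne']
    _ ≤ y ^ n * exp (x / y - 1) ^ n := by gcongr
    _ = y ^ n * exp (n * (x / y - 1)) := by rw [exp_nat_mul]
  have exponent_le : n * (x / y - 1) - c * x ≤ -(c * y) := by
    have : n * (x / y - 1) - c * x + c * y = (x - y) * (n - c * y) / y := by field_simp; ring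
    linarith [div_nonpos_of_nonpos_of_nonneg h hy.le]
  calc x ^ n * exp (-(c * x))
      ≤ y ^ n * exp (n * (x / y - 1)) * exp (-(c * x)) := by gcongr
    _ = y ^ n * exp (n * (x / y - 1) - c * x) := by rw [mul_assoc, ← exp_add, ← sub_eq_add_neg]
    _ ≤ y ^ n * exp (-(c * y)) := by gcongr

theorem exp_neg_111_div_100_gt : (0.3292 : ℝ) < exp (-1.11) := by
  have exp_small : exp 0.11 ≤ 1.1163 := by
    refine (exp_bound' (n := 4) (by norm_num) (by norm_num) (by norm_num)).trans ?_
    norm_num [Finset.sum_range_succ, Nat.factorial]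
  have exp_le : exp 1.11 ≤ 2.7182818286 * 1.1163 := by
    rw [show (1.11 : ℝ) = 1 + 0.11 by norm_num, exp_add]
    gcongr
    exact exp_one_lt_d9.le
  rw [exp_neg, lt_inv_comm₀ (by norm_num) (exp_pos _)]
  exact exp_le.trans_lt (by norm_num)

theorem exp_neg_7_div_8_mul_111_div_100_lt : exp (-(7 / 8 * 1.11)) < (0.3788 : ℝ) := by
  have le_exp := sum_le_exp_of_nonneg (x := 7 / 8 * 1.11) (by norm_num) 7
  rw [exp_neg, inv_lt_comm₀ (exp_pos _) (by norm_num)]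
  refine lt_of_lt_of_le ?_ le_exp
  norm_num [Finset.sum_range_succ, Nat.factorial]

theorem lt_mul_exp_neg_div_two {u : ℝ} (one_le_u : 1 ≤ u) (u_le : u ≤ 1.11) :
    0.1827 < u * exp (-u) / 2 := by
  have antitone : 1.11 * exp (-1.11) ≤ u * exp (-u) := by
    simpa only [pow_one, one_mul] using
      pow_mul_exp_neg_mul_le 1 (c := 1) (x := 1.11) (y := u) (by norm_num) (by linarith)
        (mul_nonpos_of_nonneg_of_nonpos (sub_nonneg.2 u_le) (by push_cast; linarith))
  linarith [exp_neg_111_div_100_gt]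

theorem sq_mul_exp_neg_mul_div_six_lt {u : ℝ} (u_nonneg : 0 ≤ u) (u_le : u ≤ 1.11) :
    u ^ 2 * exp (-(7 / 8 * u)) / 6 < 0.0778 := by
  have monotone : u ^ 2 * exp (-(7 / 8 * u)) ≤ 1.11 ^ 2 * exp (-(7 / 8 * 1.11)) :=
    pow_mul_exp_neg_mul_le 2 u_nonneg (by norm_num)
      (mul_nonpos_of_nonpos_of_nonneg (sub_nonpos.2 u_le) (by norm_num))
  linarith [exp_neg_7_div_8_mul_111_div_100_lt]

/-- For every `δ ∈ (0, 0.9]`, the value `γ = 0.1827·δ − 0.0778·δ^{3/2}` lies in `(0,1)`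
and satisfies
`γ < (δ/(2(1−γ)))·e^{−1/(1−γ)} − (δ^{3/2}/(6(1−γ)²))·e^{−7/(8(1−γ))}`. -/
theorem gamma_choice_works (δ : ℝ) (hδ0 : 0 < δ) (hδ1 : δ ≤ 0.9)
    (γ : ℝ) (hγ : γ = 0.1827 * δ - 0.0778 * δ ^ ((3 : ℝ) / 2)) :
    (0 < γ ∧ γ < 1) ∧
    γ < δ / (2 * (1 - γ)) * Real.exp (-(1 / (1 - γ))) -
      δ ^ ((3 : ℝ) / 2) / (6 * (1 - γ) ^ 2) * Real.exp (-(7 / (8 * (1 - γ)))) := by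
  have rpow_le : δ ^ ((3 : ℝ) / 2) ≤ δ :=
    rpow_le_self_of_le_one hδ0.le (by linarith) (by norm_num)
  have tangent_le : 1 + 3 / 2 * (δ - 1) ≤ δ ^ ((3 : ℝ) / 2) := by
    simpa only [add_sub_cancel] using
      one_add_mul_self_le_rpow_one_add (s := δ - 1) (by linarith) (p := 3 / 2) (by norm_num)
  have γ_pos : 0 < γ := by linarith
  have γ_le : γ ≤ 11 / 111 := by linarith
  refine ⟨⟨γ_pos, by linarith⟩, ?_⟩
  obtain ⟨u, hu⟩ : ∃ u, u = (1 - γ)⁻¹ := ⟨_, rfl⟩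
  have one_le_u : 1 ≤ u := hu ▸ (one_le_inv₀ (by linarith)).2 (by linarith)
  have u_le : u ≤ 1.11 := hu ▸ inv_le_of_inv_le₀ (by norm_num) (by linarith [γ_le])
  calc γ = δ * 0.1827 - δ ^ ((3 : ℝ) / 2) * 0.0778 := by rw [hγ]; ring
    _ < δ * (u * exp (-u) / 2) - δ ^ ((3 : ℝ) / 2) * (u ^ 2 * exp (-(7 / 8 * u)) / 6) := by
      gcongr
      · exact lt_mul_exp_neg_div_two one_le_u u_le
      · exact sq_mul_exp_neg_mul_div_six_lt (by linarith) u_le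
    _ = _ := by
      simp only [hu, div_eq_mul_inv, mul_inv, inv_pow, one_mul]
      ring_nf
end

section
/- For all real numbers α with 0 ≤ α ≤ 1/2 and x with 0 ≤ x ≤ 1/2, it holds that 2 − α − x − (2 − α − 2x)²/(2(2 − α)²) ≤ 3/2. -/
/-!
In terms of `u = x / (2 - α)` the subtracted square is `(1 - 2 * u) ^ 2 / 2`, and `3 / 2` minus the
left-hand side becomes `2 * u ^ 2 - α * u + α`. As a quadratic in `u` this has discriminant
`α * (α - 8)`, so it is nonnegative for every `u` as soon as `0 ≤ α ≤ 8`.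
-/

theorem two_sub_sub_sub_sq_div_eq {K : Type*} [Field K] [NeZero (2 : K)] {α : K} (hα : α ≠ 2)
    (x : K) :
    2 - α - x - (2 - α - 2 * x) ^ 2 / (2 * (2 - α) ^ 2) =
      3 / 2 - (2 * (x / (2 - α)) ^ 2 - α * (x / (2 - α)) + α) := by
  have two_sub_ne_zero : 2 - α ≠ 0 := sub_ne_zero.mpr hα.symm
  field_simp
  ring

theorem two_mul_sq_sub_mul_add_nonneg {K : Type*} [Field K] [LinearOrder K]
    [IsStrictOrderedRing K] {α : K} (hα0 : 0 ≤ α) (hα8 : α ≤ 8) (u : K) :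
    0 ≤ 2 * u ^ 2 - α * u + α := by
  have complete_square : 2 * u ^ 2 - α * u + α = 2 * (u - α / 4) ^ 2 + α * (8 - α) / 8 := by ring
  have : 0 ≤ 8 - α := sub_nonneg.mpr hα8
  rw [complete_square]
  positivity

theorem elementary_inequality_general {K : Type*} [Field K] [LinearOrder K]
    [IsStrictOrderedRing K] {α : K} (hα0 : 0 ≤ α) (hα8 : α ≤ 8) (hα2 : α ≠ 2) (x : K) :
    2 - α - x - (2 - α - 2 * x) ^ 2 / (2 * (2 - α) ^ 2) ≤ 3 / 2 := by
  rw [two_sub_sub_sub_sq_div_eq hα2]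
  exact sub_le_self _ (two_mul_sq_sub_mul_add_nonneg hα0 hα8 _)

/-- For all `0 ≤ α ≤ 1/2` and `0 ≤ x ≤ 1/2` it holds that
`2 − α − x − (2 − α − 2x)²/(2(2 − α)²) ≤ 3/2`. -/
theorem elementary_inequality (α x : ℝ) (hα0 : 0 ≤ α) (hα : α ≤ 1 / 2)
    (hx0 : 0 ≤ x) (hx : x ≤ 1 / 2) :
    2 - α - x - (2 - α - 2 * x) ^ 2 / (2 * (2 - α) ^ 2) ≤ 3 / 2 :=
  elementary_inequality_general hα0 (by linarith) (by linarith) x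
end
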